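/- arXiv:2509.11710 — 5 statements merged into one kernel-verified Lean document; each statement's English description precedes it below -/
import Mathlib

section
/- Let d ≥ 2. For every ε > 0 there exists a compact set E ⊆ ℝ^d such that the Hausdorff dimension of E is strictly greater than d/2 − ε and yet the dot product set Π(E) has one-dimensional Lebesgue measure zero. -/
/-!
The set is `E = C ^ d`, where `C ⊆ [0, 1]` is a Cantor set of numbers whose expansions in a large
base `b` have digits zero in long gaps: for infinitely many `n` (and with `k → ∞`) all digits in the
positions from `n` up to `2 * n + k` vanish. For such an `n`, each coordinate of a point of `E` is
`p / b ^ n + O(b ^ (-2 * n - k))` with an integer `0 ≤ p ≤ b ^ n`, so a dot product of two points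
of `E` is within `O(b ^ (-2 * n - k))` of one of the `O(b ^ (2 * n))` numbers `P / b ^ (2 * n)`.
Hence `Π(E)` has measure `O(b ^ (-k))` for every `k` (`volume_dotSet_le`), that is, measure zero.

For the dimension, the free digits are restricted to values below `B = b / 2`, which makes distinct
digit sequences metrically separated (`sparse_sep`). Reading the free digits in base `B`, with the
gaps removed, is then a well defined map from `C` onto `[0, 1]`. If the `i`-th free digit is in
position `π i`, this map is Hölder of exponent `r` as soon as `b ^ (r * π i) ≤ B ^ i`
(`ofDigits_holder`), and applying it coordinatewise gives `dimH E ≥ d * r`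
(`le_dimH_sparseCube`). The positions `gapPos` satisfy `π i ≤ (2 + 4 / t) * i`; with
`b = 2 ^ t` and `B = 2 ^ (t - 1)` this allows `r = (t - 1) / (2 * t + 4)`, which tends to `1 / 2`.
-/

open MeasureTheory
open scoped RealInnerProductSpace ENNReal

/-- The dot product set `Π(E) = {x · y : x, y ∈ E}`. -/
def dotSet {d : ℕ} (E : Set (EuclideanSpace ℝ (Fin d))) : Set ℝ :=
  {t | ∃ x ∈ E, ∃ y ∈ E, ⟪x, y⟫ = t}

/-! ### Numbers with sparse digits -/

/-- The `i`-th summand of `sparse B π a`. -/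
noncomputable def sparseTerm (B : ℕ) (π : ℕ → ℕ) (a : ℕ → Fin B) (i : ℕ) : ℝ :=
  (a i : ℝ) * ((2 * B : ℝ) ^ (π i + 1))⁻¹

/-- The real number whose expansion in base `2 * B` has the digit `a i` in position `π i`
(position `0` being the first one after the point) and zeros elsewhere. All digits are less than
half the base, so distinct digit sequences give well separated numbers. -/
noncomputable def sparse (B : ℕ) (π : ℕ → ℕ) (a : ℕ → Fin B) : ℝ :=
  ∑' i, sparseTerm B π a i

lemma sparseTerm_nonneg (B : ℕ) (π : ℕ → ℕ) (a : ℕ → Fin B) (i : ℕ) :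
    0 ≤ sparseTerm B π a i := by
  unfold sparseTerm; positivity

lemma hasSum_majorant {B : ℕ} (hB : 1 ≤ B) (m : ℕ) :
    HasSum (fun j : ℕ ↦ (2 * B - 1 : ℝ) / 2 * ((2 * B : ℝ) ^ (m + j + 1))⁻¹)
      ((1 / 2) * ((2 * B : ℝ) ^ m)⁻¹) := by
  have hB' : (1 : ℝ) ≤ B := by exact_mod_cast hB
  have h := (hasSum_geometric_of_lt_one (r := (2 * B : ℝ)⁻¹) (by positivity)
    (inv_lt_one_of_one_lt₀ (by linarith))).mul_left
      ((2 * B - 1 : ℝ) / 2 * ((2 * B : ℝ) ^ (m + 1))⁻¹)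
  have hf : (fun j : ℕ ↦ (2 * B - 1 : ℝ) / 2 * ((2 * B : ℝ) ^ (m + j + 1))⁻¹) =
      fun j ↦ (2 * B - 1 : ℝ) / 2 * ((2 * B : ℝ) ^ (m + 1))⁻¹ * (2 * B : ℝ)⁻¹ ^ j := by
    ext j
    rw [inv_pow, mul_assoc, ← mul_inv, ← pow_add, show m + j + 1 = m + 1 + j by ring]
  have hv : (1 / 2) * ((2 * B : ℝ) ^ m)⁻¹ =
      (2 * B - 1 : ℝ) / 2 * ((2 * B : ℝ) ^ (m + 1))⁻¹ * (1 - (2 * B : ℝ)⁻¹)⁻¹ := by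
    have h1 : (2 * B - 1 : ℝ) ≠ 0 := by linarith
    have h2 : (1 - (2 * B : ℝ)⁻¹) = (2 * B - 1) / (2 * B) := by
      field_simp
    rw [h2, pow_succ]
    field_simp
  rw [hf, hv]
  exact h

lemma sparseTerm_le {B : ℕ} {π : ℕ → ℕ} (hπ : StrictMono π) (a : ℕ → Fin B) (i j : ℕ) :
    sparseTerm B π a (j + i) ≤ (2 * B - 1 : ℝ) / 2 * ((2 * B : ℝ) ^ (π i + j + 1))⁻¹ := by
  have hB : 1 ≤ B := (a 0).pos
  have hB' : (1 : ℝ) ≤ B := by exact_mod_cast hB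
  have h1 : ((a (j + i) : ℕ) : ℝ) + 1 ≤ B := by exact_mod_cast (a (j + i)).isLt
  have h2 : π i + j ≤ π (j + i) := by
    induction j with
    | zero => simp
    | succ j ih =>
      have h1 := ih (by exact_mod_cast (a (j + i)).isLt)
      have := hπ (show j + i < j + 1 + i by omega)
      omega
  unfold sparseTerm
  gcongr <;> linarith

lemma summable_sparseTerm {B : ℕ} {π : ℕ → ℕ} (hπ : StrictMono π) (a : ℕ → Fin B) :
    Summable (sparseTerm B π a) :=
  Summable.of_nonneg_of_le (sparseTerm_nonneg B π a)
    (fun j ↦ by simpa using sparseTerm_le hπ a 0 j) (hasSum_majorant (a 0).pos (π 0)).summable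

/-- Cutting the expansion before the `i`-th digit changes the number by at most half a unit of
position `π i`. -/
lemma sparse_tail {B : ℕ} {π : ℕ → ℕ} (hπ : StrictMono π) (a : ℕ → Fin B) (i : ℕ) :
    ∑ j ∈ Finset.range i, sparseTerm B π a j ≤ sparse B π a ∧
    sparse B π a ≤ ∑ j ∈ Finset.range i, sparseTerm B π a j +
      (1 / 2) * ((2 * B : ℝ) ^ π i)⁻¹ := by
  have hs := summable_sparseTerm hπ a
  have h := hs.sum_add_tsum_nat_add i
  have h0 : 0 ≤ ∑' j, sparseTerm B π a (j + i) := tsum_nonneg fun j ↦ sparseTerm_nonneg _ _ _ _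
  have hm := hasSum_majorant (a 0).pos (π i)
  have h1 : ∑' j, sparseTerm B π a (j + i) ≤ (1 / 2) * ((2 * B : ℝ) ^ π i)⁻¹ := by
    rw [← hm.tsum_eq]
    exact ((summable_nat_add_iff i).2 hs).tsum_le_tsum (sparseTerm_le hπ a i) hm.summable
  unfold sparse
  constructor <;> linarith

lemma continuous_sparse {B : ℕ} {π : ℕ → ℕ} (hπ : StrictMono π) : Continuous (sparse B π) := by
  rcases Nat.eq_zero_or_pos B with rfl | hB
  · exact continuous_of_const fun a ↦ (a 0).elim0
  refine continuous_tsum (fun i ↦ ?_) (hasSum_majorant hB (π 0)).summable fun j a ↦ ?_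
  · unfold sparseTerm
    exact (continuous_of_discreteTopology (f := fun x : Fin B ↦ ((x : ℕ) : ℝ))).comp
      (continuous_apply i) |>.mul continuous_const
  · rw [Real.norm_of_nonneg (sparseTerm_nonneg _ _ _ _)]
    simpa using sparseTerm_le hπ a 0 j

/-- If every one of the first `i` positions is below `n`, the truncated number is an integer
multiple of the unit of the `n`-digit expansions. -/
lemma exists_head {B : ℕ} {π : ℕ → ℕ} (hπ : StrictMono π) (a : ℕ → Fin B) (i n : ℕ)
    (hn : ∀ j < i, π j + 1 ≤ n) :
    ∃ P : ℕ, P ≤ (2 * B) ^ n ∧ (P : ℝ) / (2 * B) ^ n ≤ sparse B π a ∧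
      sparse B π a ≤ (P : ℝ) / (2 * B) ^ n + ((2 * B : ℝ) ^ π i)⁻¹ := by
  have hB : 1 ≤ B := (a 0).pos
  have hB' : (1 : ℝ) ≤ B := by exact_mod_cast hB
  obtain ⟨h1, h2⟩ := sparse_tail hπ a i
  have hP : ((∑ j ∈ Finset.range i, (a j : ℕ) * (2 * B) ^ (n - (π j + 1)) : ℕ) : ℝ) /
      (2 * B) ^ n = ∑ j ∈ Finset.range i, sparseTerm B π a j := by
    push_cast
    rw [Finset.sum_div]
    refine Finset.sum_congr rfl fun j hj ↦ ?_
    have h := hn j (Finset.mem_range.1 hj)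
    unfold sparseTerm
    rw [pow_sub₀ _ (by positivity) h]
    field_simp
  refine ⟨_, ?_, by rw [hP]; exact h1, ?_⟩
  · have h3 := (sparse_tail hπ a 0).2
    have h4 : ((2 * B : ℝ) ^ π 0)⁻¹ ≤ 1 := inv_le_one_of_one_le₀ (one_le_pow₀ (by linarith))
    rw [← hP] at h1
    simp only [Finset.range_zero, Finset.sum_empty] at h3
    have h5 := h1.trans (show _ ≤ (1 : ℝ) by linarith)
    rw [div_le_one (by positivity)] at h5
    exact_mod_cast h5
  · rw [hP]
    have : 0 ≤ ((2 * B : ℝ) ^ π i)⁻¹ := by positivity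
    linarith

lemma sparse_sep_aux {B : ℕ} {π : ℕ → ℕ} (hπ : StrictMono π) (a c : ℕ → Fin B) (i : ℕ)
    (hac : ∀ j < i, a j = c j) (hlt : a i < c i) :
    ((2 * B : ℝ) ^ (π i + 1))⁻¹ / 2 ≤ sparse B π c - sparse B π a := by
  have hB : 1 ≤ B := (a 0).pos
  have hB' : (1 : ℝ) ≤ B := by exact_mod_cast hB
  have h1 := (sparse_tail hπ a (i + 1)).2
  have h2 := (sparse_tail hπ c (i + 1)).1
  rw [Finset.sum_range_succ] at h1 h2
  have h3 : ∑ j ∈ Finset.range i, sparseTerm B π a j = ∑ j ∈ Finset.range i, sparseTerm B π c j :=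
    Finset.sum_congr rfl fun j hj ↦ by
      unfold sparseTerm
      rw [hac j (Finset.mem_range.1 hj)]
  have h4 : ((2 * B : ℝ) ^ π (i + 1))⁻¹ ≤ ((2 * B : ℝ) ^ (π i + 1))⁻¹ := by
    have : π i + 1 ≤ π (i + 1) := hπ (Nat.lt_succ_self i)
    gcongr
    linarith
  have h5 : sparseTerm B π a i + ((2 * B : ℝ) ^ (π i + 1))⁻¹ ≤ sparseTerm B π c i := by
    have : ((a i : ℕ) : ℝ) + 1 ≤ ((c i : ℕ) : ℝ) := by exact_mod_cast hlt
    unfold sparseTerm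
    rw [← add_one_mul]
    gcongr
  linarith

lemma sparse_sep {B : ℕ} {π : ℕ → ℕ} (hπ : StrictMono π) (a c : ℕ → Fin B) (i : ℕ)
    (hac : ∀ j < i, a j = c j) (hne : a i ≠ c i) :
    ((2 * B : ℝ) ^ (π i + 1))⁻¹ / 2 ≤ |sparse B π a - sparse B π c| := by
  rcases lt_or_gt_of_ne hne with h | h
  · rw [abs_sub_comm]
    exact (sparse_sep_aux hπ a c i hac h).trans (le_abs_self _)
  · exact (sparse_sep_aux hπ c a i (fun j hj ↦ (hac j hj).symm) h).trans (le_abs_self _)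

/-- Reading the digits of `sparse B π a` without the gaps is Hölder of exponent `r`, provided the
gaps are so sparse that `B ^ i` dominates `(2 * B) ^ (r * π i)`. -/
lemma ofDigits_holder {B : ℕ} {π : ℕ → ℕ} (hπ : StrictMono π) {r : ℝ} (hr : 0 < r)
    (hgrow : ∀ i, (2 * B : ℝ) ^ (r * π i) ≤ (B : ℝ) ^ i) (a c : ℕ → Fin B) :
    |Real.ofDigits a - Real.ofDigits c| ≤
      (4 * B : ℝ) ^ r * |sparse B π a - sparse B π c| ^ r := by
  have hB : 1 ≤ B := (a 0).pos
  have hB' : (1 : ℝ) ≤ B := by exact_mod_cast hB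
  by_cases h : a = c
  · subst h
    simp only [sub_self, abs_zero]
    positivity
  classical
  have hex : ∃ i, a i ≠ c i := Function.ne_iff.1 h
  have hlt : ∀ j < Nat.find hex, a j = c j := fun j hj ↦ not_not.1 (Nat.find_min hex hj)
  have hsep := sparse_sep hπ a c _ hlt (Nat.find_spec hex)
  refine (Real.abs_ofDigits_sub_ofDigits_le hlt).trans ?_
  set i := Nat.find hex
  rw [← Real.mul_rpow (by positivity) (abs_nonneg _)]
  calc ((B : ℝ) ^ i)⁻¹ ≤ ((2 * B : ℝ) ^ (r * π i))⁻¹ := by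
        gcongr
        exact hgrow i
    _ = (((2 * B : ℝ) ^ π i)⁻¹) ^ r := by
        rw [Real.inv_rpow (by positivity), mul_comm r, Real.rpow_mul (by positivity),
          Real.rpow_natCast]
    _ ≤ _ := by
        refine Real.rpow_le_rpow (by positivity) ?_ hr.le
        calc ((2 * B : ℝ) ^ π i)⁻¹ = 4 * B * (((2 * B : ℝ) ^ (π i + 1))⁻¹ / 2) := by
              rw [pow_succ]
              field_simp
              norm_num
          _ ≤ _ := by gcongr

/-! ### Powers of the Cantor set: dimension and dot products -/

/-- The `d`-fold power of the range of `sparse B π`. -/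
def sparseCube (d B : ℕ) (π : ℕ → ℕ) : Set (EuclideanSpace ℝ (Fin d)) :=
  Set.range fun z : Fin d → ℕ → Fin B ↦ WithLp.toLp 2 fun k ↦ sparse B π (z k)

lemma isCompact_sparseCube (d B : ℕ) {π : ℕ → ℕ} (hπ : StrictMono π) :
    IsCompact (sparseCube d B π) := by
  refine isCompact_range ?_
  have := continuous_sparse (B := B) hπ
  fun_prop

lemma sparse_injective {B : ℕ} {π : ℕ → ℕ} (hπ : StrictMono π) :
    Function.Injective (sparse B π) := by
  intro a c h
  by_contra hne
  classical
  have hB : 1 ≤ B := (a 0).pos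
  have hex : ∃ i, a i ≠ c i := Function.ne_iff.1 hne
  have hsep := sparse_sep hπ a c _ (fun j hj ↦ not_not.1 (Nat.find_min hex hj)) (Nat.find_spec hex)
  rw [h, sub_self, abs_zero] at hsep
  have : 0 < ((2 * B : ℝ) ^ (π (Nat.find hex) + 1))⁻¹ / 2 := by positivity
  linarith

/-- The coordinatewise digit-reading map sends `sparseCube d B π` onto the unit cube and is Hölder
of exponent `r`, which bounds the dimension from below. -/
lemma le_dimH_sparseCube (d : ℕ) {B : ℕ} (hB : 2 ≤ B) {π : ℕ → ℕ} (hπ : StrictMono π) {r : ℝ}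
    (hr : 0 < r) (hgrow : ∀ i, (2 * B : ℝ) ^ (r * π i) ≤ (B : ℝ) ^ i) :
    ENNReal.ofReal (d * r) ≤ dimH (sparseCube d B π) := by
  have : NeZero B := ⟨by omega⟩
  let F : EuclideanSpace ℝ (Fin d) → (Fin d → ℝ) :=
    fun x k ↦ Real.ofDigits (Function.invFun (sparse B π) (x k))
  have hF : ∀ z : Fin d → ℕ → Fin B,
      F (WithLp.toLp 2 fun k ↦ sparse B π (z k)) = fun k ↦ Real.ofDigits (z k) := by
    intro z
    ext k
    simp only [F]
    rw [Function.leftInverse_invFun (sparse_injective hπ)]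
  have himage : Set.Icc (0 : Fin d → ℝ) 1 ⊆ F '' sparseCube d B π := by
    intro y hy
    have : ∀ k, ∃ a : ℕ → Fin B, Real.ofDigits a = y k := fun k ↦ by
      obtain ⟨a, -, ha⟩ := Real.ofDigits_SurjOn (b := B) (by omega) ⟨hy.1 k, hy.2 k⟩
      exact ⟨a, ha⟩
    choose z hz using this
    exact ⟨_, ⟨z, rfl⟩, by rw [hF]; ext k; exact hz k⟩
  have hholder : HolderOnWith (Real.toNNReal ((4 * B : ℝ) ^ r)) (Real.toNNReal r) F
      (sparseCube d B π) := by
    rintro _ ⟨z, rfl⟩ _ ⟨w, rfl⟩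
    rw [hF, hF, Real.coe_toNNReal _ hr.le, edist_dist, edist_dist,
      ENNReal.ofReal_rpow_of_nonneg dist_nonneg hr.le, ← ENNReal.ofReal,
      ← ENNReal.ofReal_mul (by positivity)]
    refine ENNReal.ofReal_le_ofReal ?_
    refine (dist_pi_le_iff (by positivity)).2 fun k ↦ ?_
    rw [Real.dist_eq]
    refine (ofDigits_holder hπ hr hgrow (z k) (w k)).trans ?_
    gcongr
    rw [EuclideanSpace.dist_eq]
    refine Real.le_sqrt_of_sq_le ?_
    rw [← Real.dist_eq]
    exact Finset.single_le_sum (f := fun k ↦ dist (sparse B π (z k)) (sparse B π (w k)) ^ 2)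
      (fun _ _ ↦ by positivity) (Finset.mem_univ k)
  have hcube : dimH (Set.Icc (0 : Fin d → ℝ) 1) = d := by
    rw [Real.dimH_of_nonempty_interior, Module.finrank_fin_fun]
    refine ⟨fun _ ↦ 1 / 2, ?_⟩
    rw [← Set.pi_univ_Icc, interior_pi_set Set.finite_univ]
    simp only [interior_Icc]
    intro k _
    simp only [Pi.zero_apply, Pi.one_apply, Set.mem_Ioo]
    norm_num
  have h1 := (dimH_mono himage).trans (hholder.dimH_image_le (Real.toNNReal_pos.2 hr))
  rw [hcube] at h1
  have h2 := ENNReal.mul_le_of_le_div h1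
  rwa [ENNReal.ofReal_mul (by positivity), ENNReal.ofReal_natCast]

/-- If a gap of the digit pattern reaches from `n` to `2 * n + k`, the dot products lie in the
intervals of length `O((2 * B) ^ (-(2 * n + k)))` to the right of the multiples of
`(2 * B) ^ (-2 * n)`. -/
lemma volume_dotSet_le (d : ℕ) {B : ℕ} (hB : 1 ≤ B) {π : ℕ → ℕ} (hπ : StrictMono π) (i n k : ℕ)
    (hn : ∀ j < i, π j + 1 ≤ n) (hk : 2 * n + k ≤ π i) :
    volume (dotSet (sparseCube d B π)) ≤
      ENNReal.ofReal ((d + 1) * (3 * d) * ((2 * B : ℝ) ^ k)⁻¹) := by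
  have hB' : (1 : ℝ) ≤ B := by exact_mod_cast hB
  set b : ℝ := 2 * B with hb
  have hb1 : 1 ≤ b := by linarith
  have hb0 : 0 < b := by linarith
  set e : ℝ := (b ^ π i)⁻¹ with he
  have he0 : 0 < e := by positivity
  have he1 : e ≤ 1 := inv_le_one_of_one_le₀ (one_le_pow₀ hb1)
  have hsub : dotSet (sparseCube d B π) ⊆
      ⋃ P ∈ Finset.range (d * (2 * B) ^ (2 * n) + 1),
        Set.Icc ((P : ℝ) / b ^ (2 * n)) ((P : ℝ) / b ^ (2 * n) + 3 * d * e) := by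
    rintro _ ⟨_, ⟨z, rfl⟩, _, ⟨w, rfl⟩, rfl⟩
    choose P hP1 hP2 hP3 using fun k ↦ exists_head hπ (z k) i n hn
    choose Q hQ1 hQ2 hQ3 using fun k ↦ exists_head hπ (w k) i n hn
    have hcast : ((∑ k, P k * Q k : ℕ) : ℝ) / b ^ (2 * n) =
        ∑ k, ((P k : ℝ) / b ^ n) * ((Q k : ℝ) / b ^ n) := by
      push_cast
      rw [Finset.sum_div]
      refine Finset.sum_congr rfl fun k _ ↦ ?_
      rw [two_mul, pow_add, div_mul_div_comm]
    have hinner : ⟪(WithLp.toLp 2 fun k ↦ sparse B π (z k) : EuclideanSpace ℝ (Fin d)),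
        WithLp.toLp 2 fun k ↦ sparse B π (w k)⟫ = ∑ k, sparse B π (z k) * sparse B π (w k) := by
      simp [PiLp.inner_apply, mul_comm]
    rw [hinner]
    simp only [Set.mem_iUnion]
    refine ⟨∑ k, P k * Q k, ?_, ?_, ?_⟩
    · rw [Finset.mem_range, Nat.lt_succ_iff]
      calc ∑ k, P k * Q k ≤ ∑ _k : Fin d, (2 * B) ^ (2 * n) := by
            refine Finset.sum_le_sum fun k _ ↦ ?_
            rw [two_mul n, pow_add]
            exact Nat.mul_le_mul (hP1 k) (hQ1 k)
        _ = _ := by simp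
    · rw [hcast]
      refine Finset.sum_le_sum fun k _ ↦ mul_le_mul (hP2 k) (hQ2 k) (by positivity) ?_
      exact le_trans (by positivity) (hP2 k)
    · rw [hcast]
      calc ∑ k, sparse B π (z k) * sparse B π (w k)
          ≤ ∑ k, (((P k : ℝ) / b ^ n) * ((Q k : ℝ) / b ^ n) + 3 * e) := by
            refine Finset.sum_le_sum fun k _ ↦ ?_
            have hp : (P k : ℝ) / b ^ n ≤ 1 := by
              rw [div_le_one (by positivity), hb]
              exact_mod_cast hP1 k
            have hq : (Q k : ℝ) / b ^ n ≤ 1 := by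
              rw [div_le_one (by positivity), hb]
              exact_mod_cast hQ1 k
            have hp0 : 0 ≤ (P k : ℝ) / b ^ n := by positivity
            have hq0 : 0 ≤ (Q k : ℝ) / b ^ n := by positivity
            have hw0 : 0 ≤ sparse B π (w k) := hq0.trans (hQ2 k)
            calc _ ≤ ((P k : ℝ) / b ^ n + e) * ((Q k : ℝ) / b ^ n + e) :=
                  mul_le_mul (hP3 k) (hQ3 k) hw0 (by positivity)
              _ ≤ _ := by nlinarith
        _ = _ := by
            rw [Finset.sum_add_distrib]
            simp
            ring
  refine (measure_mono hsub).trans ((measure_biUnion_finset_le _ _).trans ?_)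
  simp only [Real.volume_Icc, add_sub_cancel_left, Finset.sum_const, Finset.card_range]
  rw [nsmul_eq_mul, ← ENNReal.ofReal_natCast, ← ENNReal.ofReal_mul (by positivity)]
  refine ENNReal.ofReal_le_ofReal ?_
  have h1 : (1 : ℝ) ≤ b ^ (2 * n) := one_le_pow₀ hb1
  have h2 : e ≤ (b ^ (2 * n))⁻¹ * (b ^ k)⁻¹ := by
    rw [he, ← mul_inv, ← pow_add]
    gcongr
  push_cast
  rw [← hb]
  calc (d * b ^ (2 * n) + 1) * (3 * d * e)
      ≤ ((d + 1) * b ^ (2 * n)) * (3 * d * ((b ^ (2 * n))⁻¹ * (b ^ k)⁻¹)) := by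
        gcongr
        linarith
    _ = _ := by
        field_simp

/-! ### The digit positions -/

/-- Digit positions: at each index `t ^ k` a new gap is inserted, which lengthens the prefix to
slightly more than twice its length. -/
def gapPos (t i : ℕ) : ℕ := i + (t + 4) * (t ^ Nat.log t i / t)

lemma gapPos_strictMono {t : ℕ} (ht : 1 ≤ t) : StrictMono (gapPos t) := by
  intro i j hij
  unfold gapPos
  have : t ^ Nat.log t i / t ≤ t ^ Nat.log t j / t :=
    Nat.div_le_div_right (Nat.pow_le_pow_right ht (Nat.log_mono_right hij.le))
  exact Nat.add_lt_add_of_lt_of_le hij (Nat.mul_le_mul_left _ this)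

lemma gapPos_le {t : ℕ} (ht : 2 ≤ t) (i : ℕ) : t * gapPos t i ≤ (2 * t + 4) * i := by
  have h : t * (t ^ Nat.log t i / t) ≤ i := by
    rcases Nat.eq_zero_or_pos i with rfl | hi
    · simp [Nat.div_eq_of_lt (show 1 < t by omega)]
    · exact (Nat.mul_div_le _ _).trans (Nat.pow_log_le_self t hi.ne')
  unfold gapPos
  nlinarith

lemma gapPos_gap {t : ℕ} (ht : 8 ≤ t) (k : ℕ) :
    2 * (gapPos t (t ^ (k + 2) - 1) + 1) + k ≤ gapPos t (t ^ (k + 2)) := by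
  have hpos : 0 < t := by omega
  have h1 : Nat.log t (t ^ (k + 2)) = k + 2 := Nat.log_pow (by omega) _
  have hlt : t ^ (k + 1) < t ^ (k + 2) := Nat.pow_lt_pow_right (by omega) (by omega)
  have h2 : Nat.log t (t ^ (k + 2) - 1) = k + 1 := by
    have : 0 < t ^ (k + 2) := by positivity
    exact Nat.log_eq_of_pow_le_of_lt_pow (by omega) (show _ < t ^ (k + 2) by omega)
  unfold gapPos
  rw [h1, h2, pow_succ t (k + 1), pow_succ t k, Nat.mul_div_cancel _ hpos,
    Nat.mul_div_cancel _ hpos]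
  have h3 : k < t ^ k := Nat.lt_pow_self (by omega)
  set s := t ^ k
  have h4 : 1 ≤ s * t * t := Nat.mul_pos (Nat.mul_pos (by omega) hpos) hpos
  zify [h4]
  have : (8 : ℤ) ≤ t := by exact_mod_cast ht
  have : (k : ℤ) < s := by exact_mod_cast h3
  nlinarith

/-- For every `d ≥ 2` and `ε > 0` there is a compact set `E ⊆ ℝ^d` with
Hausdorff dimension greater than `d/2 - ε` whose dot product set has Lebesgue
measure zero. -/
theorem dot_product_counterexample
    (d : ℕ) (hd : 2 ≤ d) (ε : ℝ) (hε : 0 < ε) :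
    ∃ E : Set (EuclideanSpace ℝ (Fin d)), IsCompact E ∧
      ENNReal.ofReal ((d : ℝ) / 2 - ε) < dimH E ∧ volume (dotSet E) = 0 := by
  have hd0 : (2 : ℝ) ≤ d := by exact_mod_cast hd
  -- Base `2 ^ (s + 8)`, digits below `2 ^ (s + 7)`, gaps at the powers of `t = s + 8`.
  obtain ⟨s, hs⟩ := exists_nat_gt (3 * d / ε)
  have hs0 : (0 : ℝ) ≤ s := s.cast_nonneg
  have hπ : StrictMono (gapPos (s + 8)) := gapPos_strictMono (by omega)
  set r : ℝ := (s + 7) / (2 * s + 20) with hr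
  have hr0 : 0 < r := by positivity
  refine ⟨sparseCube d (2 ^ (s + 7)) (gapPos (s + 8)), isCompact_sparseCube _ _ hπ, ?_, ?_⟩
  · have hgrow : ∀ i, (2 * (2 ^ (s + 7) : ℕ) : ℝ) ^ (r * gapPos (s + 8) i) ≤
        ((2 ^ (s + 7) : ℕ) : ℝ) ^ i := by
      intro i
      have h1 : ((s + 8) * gapPos (s + 8) i : ℝ) ≤ (2 * s + 20) * i := by
        have := gapPos_le (t := s + 8) (by omega) i
        have h : (((s + 8) * gapPos (s + 8) i : ℕ) : ℝ) ≤ ((2 * (s + 8) + 4) * i : ℕ) := by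
          exact_mod_cast this
        push_cast at h
        linarith
      have h2 : (2 * (2 ^ (s + 7) : ℕ) : ℝ) = 2 ^ ((s : ℝ) + 8) := by
        rw [show (s : ℝ) + 8 = ((s + 8 : ℕ) : ℝ) by push_cast; ring, Real.rpow_natCast]
        push_cast
        ring
      rw [h2, ← Real.rpow_mul (by norm_num), Nat.cast_pow, ← pow_mul, ← Real.rpow_natCast]
      push_cast
      refine Real.rpow_le_rpow_of_exponent_le (by norm_num) ?_
      calc ((s : ℝ) + 8) * (r * gapPos (s + 8) i) = r * ((s + 8) * gapPos (s + 8) i) := by ring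
        _ ≤ r * ((2 * s + 20) * i) := by gcongr
        _ = _ := by rw [hr]; field_simp
    refine lt_of_lt_of_le ?_ (le_dimH_sparseCube d (Nat.le_self_pow (by omega) 2) hπ hr0 hgrow)
    rw [ENNReal.ofReal_lt_ofReal_iff (by positivity)]
    rw [div_lt_iff₀ hε] at hs
    have h3 : (d : ℝ) / 2 - d * r = 3 * d / (2 * s + 20) := by
      rw [hr]; field_simp; ring
    have h4 : 3 * d / (2 * s + 20) < ε := by
      rw [div_lt_iff₀ (by positivity)]
      nlinarith
    linarith
  · have hb : (1 : ℝ) < 2 * (2 ^ (s + 7) : ℕ) := by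
      have : (1 : ℝ) ≤ (2 ^ (s + 7) : ℕ) := by exact_mod_cast Nat.one_le_two_pow
      linarith
    have hlim : Filter.Tendsto (fun k : ℕ ↦ ENNReal.ofReal
        ((d + 1) * (3 * d) * ((2 * (2 ^ (s + 7) : ℕ) : ℝ) ^ k)⁻¹)) Filter.atTop (nhds 0) := by
      rw [← ENNReal.ofReal_zero, ← mul_zero (((d : ℝ) + 1) * (3 * d))]
      exact ENNReal.tendsto_ofReal
        ((tendsto_inv_atTop_zero.comp (tendsto_pow_atTop_atTop_of_one_lt hb)).const_mul _)
    refine le_antisymm (ge_of_tendsto' hlim fun k ↦ ?_) zero_le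
    refine volume_dotSet_le d Nat.one_le_two_pow hπ _ _ k ?_ (gapPos_gap (by omega) k)
    intro j hj
    exact Nat.succ_le_succ (hπ.monotone (by omega))
end

section
/- Let d ≥ 2 and let a = (a₁, …, a_{d−1}, a_d) ∈ ℝ^d with ā = (a₁, …, a_{d−1}). Define T_a on {x̄ ∈ ℝ^{d−1} : |x̄|² + a_d ≠ 0} by T_a(x̄) = −(x̄ + ā)/(2(|x̄|² + a_d)). Then at every point x̄ = (x₁, …, x_{d−1}) of its domain, the Jacobian determinant of T_a equals 2 · (−1/(2(|x̄|² + a_d)))^d · ( Σ_{i=1}^{d−1} (x_i + a_i)² − a₁² − ⋯ − a_{d−1}² − a_d ). -/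
open MeasureTheory

/-!
With `s = |x|² + a_d` and `c = -1/(2s)`, the product rule gives the derivative
`h ↦ c • h + (⟪x, h⟫ / s²) • (x + ā)`, which is `c` times a rank-one perturbation of the identity.
By the matrix determinant lemma (`LinearMap.transvection.det`) its determinant is
`c ^ (d - 1) * (1 + ⟪x, x + ā⟫ / (c s²))`, and expanding the inner product in coordinates
yields the formula.
-/

/-- Jacobian determinant of the transformation map
`T_a(x̄) = -(x̄ + ā)/(2(|x̄|² + a_d))` on `ℝ^{d-1}`: at every point of its domain it
equals `2 · (-1/(2(|x̄|² + a_d)))^d · (Σᵢ (xᵢ + aᵢ)² - a₁² - ⋯ - a_{d-1}² - a_d)`. -/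
theorem jacobian_transformation_map
    (d : ℕ) (hd : 2 ≤ d)
    (abar : EuclideanSpace ℝ (Fin (d - 1))) (ad : ℝ)
    (x : EuclideanSpace ℝ (Fin (d - 1))) (hx : ‖x‖ ^ 2 + ad ≠ 0) :
    (fderiv ℝ (fun y : EuclideanSpace ℝ (Fin (d - 1)) =>
        (-(1 / (2 * (‖y‖ ^ 2 + ad)))) • (y + abar)) x).det
      = 2 * (-(1 / (2 * (‖x‖ ^ 2 + ad)))) ^ d *
          ((∑ i, (x i + abar i) ^ 2) - (∑ i, abar i ^ 2) - ad) := by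
  have hs : HasFDerivAt (fun y : EuclideanSpace ℝ (Fin (d - 1)) => 2 * (‖y‖ ^ 2 + ad))
      ((2 : ℝ) • ((2 : ℝ) • innerSL ℝ x)) x := by
    have h := ((hasStrictFDerivAt_norm_sq x).hasFDerivAt.add_const ad).const_mul (2 : ℝ)
    rwa [← Nat.cast_smul_eq_nsmul ℝ 2, Nat.cast_ofNat] at h
  have hc : HasFDerivAt (fun y : EuclideanSpace ℝ (Fin (d - 1)) => -(1 / (2 * (‖y‖ ^ 2 + ad))))
      ((1 / (‖x‖ ^ 2 + ad) ^ 2) • innerSL ℝ x) x := by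
    have h := ((hasDerivAt_inv (mul_ne_zero two_ne_zero hx)).comp_hasFDerivAt x hs).neg
    rw [smul_smul, smul_smul, ← neg_smul] at h
    have hcoef : -(-((2 * (‖x‖ ^ 2 + ad)) ^ 2)⁻¹ * (2 * 2)) = 1 / (‖x‖ ^ 2 + ad) ^ 2 := by
      field_simp
    rw [← mul_assoc] at hcoef
    rw [← hcoef]
    simp only [one_div]
    exact h
  have hT : HasFDerivAt (fun y : EuclideanSpace ℝ (Fin (d - 1)) =>
      (-(1 / (2 * (‖y‖ ^ 2 + ad)))) • (y + abar))
      ((-(1 / (2 * (‖x‖ ^ 2 + ad)))) • ContinuousLinearMap.id ℝ (EuclideanSpace ℝ (Fin (d - 1))) +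
        ((1 / (‖x‖ ^ 2 + ad) ^ 2) • innerSL ℝ x).smulRight (x + abar)) x :=
    hc.smul ((hasFDerivAt_id x).add_const abar)
  have hc0 : -(1 / (2 * (‖x‖ ^ 2 + ad))) ≠ 0 := by
    simpa using hx
  set c := -(1 / (2 * (‖x‖ ^ 2 + ad))) with hcdef
  rw [hT.fderiv]
  -- Factoring out `c` leaves a rank-one perturbation of the identity.
  have hlin : ((c • ContinuousLinearMap.id ℝ (EuclideanSpace ℝ (Fin (d - 1))) +
      ((1 / (‖x‖ ^ 2 + ad) ^ 2) • innerSL ℝ x).smulRight (x + abar) :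
        EuclideanSpace ℝ (Fin (d - 1)) →L[ℝ] EuclideanSpace ℝ (Fin (d - 1))) :
        EuclideanSpace ℝ (Fin (d - 1)) →ₗ[ℝ] EuclideanSpace ℝ (Fin (d - 1))) =
      c • LinearMap.transvection
        ((c⁻¹ * (1 / (‖x‖ ^ 2 + ad) ^ 2)) • (innerSL ℝ x).toLinearMap) (x + abar) := by
    ext1 h
    simp [LinearMap.transvection.apply, smul_smul, mul_assoc, hc0]
  have hinner : inner ℝ x (x + abar) = ‖x‖ ^ 2 + ∑ i, x i * abar i := by
    rw [inner_add_right, real_inner_self_eq_norm_sq]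
    simp [PiLp.inner_apply, mul_comm]
  have hsum : (∑ i, (x i + abar i) ^ 2) - (∑ i, abar i ^ 2) =
      ‖x‖ ^ 2 + 2 * ∑ i, x i * abar i := by
    rw [EuclideanSpace.real_norm_sq_eq, ← Finset.sum_sub_distrib, Finset.mul_sum,
      ← Finset.sum_add_distrib]
    exact Finset.sum_congr rfl fun i _ => by ring
  have hpow : c ^ d = c ^ (d - 1) * c := by
    rw [← pow_succ, Nat.sub_add_cancel (by omega)]
  change LinearMap.det _ = _
  rw [hlin, LinearMap.det_smul, LinearMap.transvection.det, hsum, hpow]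
  simp only [finrank_euclideanSpace_fin, LinearMap.smul_apply, ContinuousLinearMap.coe_coe,
    innerSL_apply_apply, hinner, smul_eq_mul]
  have : 1 + c⁻¹ * (1 / (‖x‖ ^ 2 + ad) ^ 2) * (‖x‖ ^ 2 + ∑ i, x i * abar i) =
      2 * c * (‖x‖ ^ 2 + 2 * ∑ i, x i * abar i - ad) := by
    rw [hcdef]
    field_simp
    ring
  rw [this]
  ring
end

section
/- Let K be a compact subset of the unit sphere S^{d−1} ⊆ ℝ^d and let r : K → (0, ∞) be the restriction to K of a C¹ function defined on an open neighborhood of K in ℝ^d. Let M = {r(e) · e : e ∈ K}. Then there exist a constant N ∈ ℕ and δ₀ > 0 such that for every unit vector e ∈ S^{d−1} and every 0 < δ < δ₀, the intersection of M with any tube of radius δ emanating from the origin in the direction e (the closed δ-neighborhood of a line through the origin with direction e, intersected with a bounded region of diameter comparable to 1) can be covered by at most N closed balls of radius 2δ. -/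
/-!
If `r(u)u` lies within `δ` of the line `ℝe`, then its radial projection `u` lies within `2δ/m`
of `e` or of `-e`, where `m > 0` is the minimum of `r` on `K`
(`mul_norm_sub_le_of_dist_le`). The map `u ↦ r(u)u` is `C¹` near the compact set `K`, hence
Lipschitz on `K` with some constant `L` (`exists_lipschitzOnWith_radial`). So the part of `M` in
the tube is a union of two sets, one for each of `±e`, of diameter at most `(4L/m)δ`. By scaling,
a set of diameter at most `Rδ` in a finite-dimensional space is covered by a number of balls of
radius `2δ` that depends only on `R` and the space (`exists_card_cover_of_dist_le`). The bound
holds for all `δ > 0`, so `δ₀ = 1` serves.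
-/

open MeasureTheory

/-- A set of diameter at most `R * δ` is covered by `N` balls of radius `2 * δ`, with `N`
independent of `δ`: translate and rescale a finite cover of `closedBall 0 R` by balls of
radius `2`. -/
lemma exists_card_cover_of_dist_le {E : Type*} [NormedAddCommGroup E] [NormedSpace ℝ E]
    [ProperSpace E] (R : ℝ) :
    ∃ N : ℕ, ∀ δ : ℝ, 0 < δ → ∀ A : Set E, (∀ x ∈ A, ∀ y ∈ A, dist x y ≤ R * δ) →
      ∃ S : Finset E, S.card ≤ N ∧ A ⊆ ⋃ c ∈ S, Metric.closedBall c (2 * δ) := by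
  classical
  obtain ⟨T, -, hTfin, hT⟩ :=
    (isCompact_closedBall (0 : E) R).finite_cover_balls (e := 2) two_pos
  lift T to Finset E using hTfin
  refine ⟨T.card, fun δ hδ A hA => ?_⟩
  rcases A.eq_empty_or_nonempty with rfl | ⟨a, ha⟩
  · exact ⟨∅, by simp, by simp⟩
  refine ⟨T.image fun c => a + δ • c, Finset.card_image_le, fun x hx => ?_⟩
  have hxa : x = a + δ • (δ⁻¹ • (x - a)) := by
    rw [smul_inv_smul₀ hδ.ne']; abel
  have hmem : δ⁻¹ • (x - a) ∈ Metric.closedBall (0 : E) R := by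
    rw [mem_closedBall_zero_iff, norm_smul, norm_inv, Real.norm_of_nonneg hδ.le,
      inv_mul_le_iff₀ hδ, ← dist_eq_norm, mul_comm]
    exact hA x hx a ha
  obtain ⟨c, hc, hxc⟩ := Set.mem_iUnion₂.1 (hT hmem)
  refine Set.mem_iUnion₂.2 ⟨a + δ • c, Finset.mem_image_of_mem _ hc, ?_⟩
  rw [Metric.mem_closedBall, hxa, dist_add_left, dist_smul₀, Real.norm_of_nonneg hδ.le, mul_comm]
  exact mul_le_mul_of_nonneg_right (Metric.mem_ball.1 hxc).le hδ.le

lemma exists_lipschitzOnWith_radial {E : Type*} [NormedAddCommGroup E] [NormedSpace ℝ E]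
    {K U : Set E} (hK : IsCompact K) (hU : IsOpen U) (hKU : K ⊆ U) {r : E → ℝ}
    (hr : ContDiffOn ℝ 1 r U) :
    ∃ L, LipschitzOnWith L (fun u => r u • u) K := by
  refine LocallyLipschitzOn.exists_lipschitzOnWith_of_compact hK fun u hu => ?_
  have hF : ContDiffAt ℝ 1 (fun u => r u • u) u :=
    (hr.contDiffAt (hU.mem_nhds (hKU hu))).smul contDiffAt_id
  obtain ⟨L, t, ht, hL⟩ := hF.exists_lipschitzOnWith
  exact ⟨L, t, mem_nhdsWithin_of_mem_nhds ht, hL⟩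

/-- Since `|ρ - t| = |‖ρ u‖ - ‖t e‖| ≤ δ`, the point `t e` may be replaced by `ρ e` at the cost of
another `δ`. -/
lemma mul_norm_sub_le_of_dist_le {E : Type*} [NormedAddCommGroup E] [NormedSpace ℝ E]
    {u e : E} (hu : ‖u‖ = 1) (he : ‖e‖ = 1) {ρ t δ : ℝ} (hρ : 0 ≤ ρ) (ht : 0 ≤ t)
    (h : dist (ρ • u) (t • e) ≤ δ) : ρ * ‖u - e‖ ≤ 2 * δ := by
  rw [dist_eq_norm] at h
  have h1 : |ρ - t| ≤ δ := by
    have := abs_norm_sub_norm_le (ρ • u) (t • e)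
    rw [norm_smul, norm_smul, hu, he, Real.norm_of_nonneg hρ, Real.norm_of_nonneg ht,
      mul_one, mul_one] at this
    exact this.trans h
  have h2 : ρ • (u - e) = (ρ • u - t • e) - (ρ - t) • e := by module
  calc ρ * ‖u - e‖ = ‖ρ • (u - e)‖ := by rw [norm_smul, Real.norm_of_nonneg hρ]
    _ ≤ ‖ρ • u - t • e‖ + ‖(ρ - t) • e‖ := by rw [h2]; exact norm_sub_le _ _
    _ ≤ 2 * δ := by rw [norm_smul, he, mul_one, Real.norm_eq_abs]; linarith

/-- Technical covering lemma: if `M = {r(e)·e : e ∈ K}` where `K ⊆ S^{d-1}` is compact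
and `r` is a positive `C¹` function on a neighborhood of `K`, then there are `N ∈ ℕ` and
`δ₀ > 0` such that for every direction `e` and every `0 < δ < δ₀`, the intersection of
`M` with the `δ`-tube around the line through the origin in direction `e` can be covered
by at most `N` closed balls of radius `2δ`. -/
theorem tube_intersection_covering
    {d : ℕ} (K : Set (EuclideanSpace ℝ (Fin d)))
    (hKcomp : IsCompact K)
    (hKsphere : K ⊆ Metric.sphere (0 : EuclideanSpace ℝ (Fin d)) 1)
    (U : Set (EuclideanSpace ℝ (Fin d))) (hU : IsOpen U) (hKU : K ⊆ U)
    (r : EuclideanSpace ℝ (Fin d) → ℝ) (hr : ContDiffOn ℝ 1 r U)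
    (hrpos : ∀ e ∈ K, 0 < r e) :
    ∃ (N : ℕ) (δ₀ : ℝ), 0 < δ₀ ∧
      ∀ e : EuclideanSpace ℝ (Fin d), ‖e‖ = 1 → ∀ δ : ℝ, 0 < δ → δ < δ₀ →
        ∃ S : Finset (EuclideanSpace ℝ (Fin d)), S.card ≤ N ∧
          ((fun e : EuclideanSpace ℝ (Fin d) => r e • e) '' K)
              ∩ {x | ∃ t : ℝ, dist x (t • e) ≤ δ}
            ⊆ ⋃ c ∈ S, Metric.closedBall c (2 * δ) := by
  classical
  obtain ⟨L, hL⟩ := exists_lipschitzOnWith_radial hKcomp hU hKU hr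
  obtain ⟨m, hm, hmr⟩ : ∃ m : ℝ, 0 < m ∧ ∀ u ∈ K, m ≤ r u := by
    rcases K.eq_empty_or_nonempty with rfl | hne
    · exact ⟨1, one_pos, by simp⟩
    · obtain ⟨u, hu, hmin⟩ := hKcomp.exists_isMinOn hne (hr.continuousOn.mono hKU)
      exact ⟨r u, hrpos u hu, fun v hv => hmin hv⟩
  obtain ⟨N, hN⟩ := exists_card_cover_of_dist_le (E := EuclideanSpace ℝ (Fin d)) (L * (4 / m))
  refine ⟨N + N, 1, one_pos, fun e he δ hδ _ => ?_⟩
  -- The points of `M` over the cap of `K` around `e'` form a set of diameter at most `(4L/m)δ`.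
  have hcap : ∀ e' : EuclideanSpace ℝ (Fin d),
      ∀ x ∈ (fun u => r u • u) '' {u ∈ K | m * ‖u - e'‖ ≤ 2 * δ},
      ∀ y ∈ (fun u => r u • u) '' {u ∈ K | m * ‖u - e'‖ ≤ 2 * δ},
        dist x y ≤ L * (4 / m) * δ := by
    rintro e' _ ⟨u, ⟨hu, hue⟩, rfl⟩ _ ⟨v, ⟨hv, hve⟩, rfl⟩
    have huv : dist u v ≤ 4 / m * δ := by
      have := dist_triangle_right u v e'
      rw [dist_eq_norm u e', dist_eq_norm v e'] at this
      rw [div_mul_eq_mul_div, le_div_iff₀ hm]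
      nlinarith
    calc dist (r u • u) (r v • v) ≤ L * dist u v := hL.dist_le_mul u hu v hv
      _ ≤ L * (4 / m * δ) := by gcongr
      _ = L * (4 / m) * δ := by ring
  obtain ⟨S₁, hS₁, hcov₁⟩ := hN δ hδ _ (hcap e)
  obtain ⟨S₂, hS₂, hcov₂⟩ := hN δ hδ _ (hcap (-e))
  refine ⟨S₁ ∪ S₂, (Finset.card_union_le _ _).trans (add_le_add hS₁ hS₂), ?_⟩
  rintro _ ⟨⟨u, hu, rfl⟩, t, ht⟩
  have hu1 : ‖u‖ = 1 := mem_sphere_zero_iff_norm.1 (hKsphere hu)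
  rw [Finset.set_biUnion_union]
  rcases le_total 0 t with h0 | h0
  · refine Or.inl (hcov₁ ⟨u, ⟨hu, ?_⟩, rfl⟩)
    exact (mul_le_mul_of_nonneg_right (hmr u hu) (norm_nonneg _)).trans
      (mul_norm_sub_le_of_dist_le hu1 he (hrpos u hu).le h0 ht)
  · refine Or.inr (hcov₂ ⟨u, ⟨hu, ?_⟩, rfl⟩)
    refine (mul_le_mul_of_nonneg_right (hmr u hu) (norm_nonneg _)).trans
      (mul_norm_sub_le_of_dist_le hu1 (by rwa [norm_neg]) (hrpos u hu).le
        (neg_nonneg.2 h0) (t := -t) ?_)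
    rwa [neg_smul_neg]
end

section
/- Let d ≥ 2 and let a ∈ ℝ^d be any translation vector. Suppose E is a compact subset of the translated unit sphere a + S^{d−1} with Hausdorff dimension strictly greater than d/2. Then there exists x ∈ E such that the pinned dot product set Π^x(E) = {x · y : y ∈ E} has positive one-dimensional Lebesgue measure; in particular, the dot product set Π(E) has positive Lebesgue measure. -/
/-!
Fix `s` with `d/2 < s < dim E`. Ordinary projection theory would bound the set of directions `x` for
which `y ↦ ⟪x, y⟫` maps `E` to a null set; here `x` has to be found in `E` itself, and the sphere is
used to see that `E` determines many directions.

*Transversality* (`exists_good_piece`). Some compact `K ⊆ E` with `dim K > s` stays away from the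
origin and satisfies `c ‖x - x'‖ ≤ dist(x, ℝ x')` for `x, x' ∈ K`. Near a point where the line through
the origin crosses the sphere transversally, this holds because `x + x' - 2a` is orthogonal to
`x - x'` but not to `x'`. The points of tangency satisfy `⟪x, a⟫ = ‖a‖² - 1`, so on them `a` plays the
role of that vector.

*Frostman's lemma* (`frostman`). `K` carries a probability measure `μ` with `μ(B(x, r)) ≤ C r^s`. It is
obtained by distributing the Hausdorff content of `K` along dyadic cubes and taking a weak limit.

*Energy estimate* (`average_projection_energy`). The `L²` norm at scale `1/N` of the image of `μ` under
`y ↦ ⟪x, y⟫` is at most a constant times `∫ |μ̂(η)|² w(η, x) dη` with `w(η, x) = ∫ e^{-‖η - t x‖²/4} dt`, a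
weight concentrated in the unit neighbourhood of the line `ℝ x`. By transversality the `x ∈ K` whose
line passes within distance `ρ` of `η` lie in a ball of radius `O(ρ / ‖η‖)`, so
`∫ w(η, x) dμ(x) ≲ min(1, ‖η‖^{-s})`. The remaining integral `∫ |μ̂(η)|² min(1, ‖η‖^{-s}) dη` is a sum over
dyadic scales of Gaussian energies of `μ`, of size `2^{j(d - 2s)}`, and converges because `2s > d`.

*Conclusion* (`exists_pin`, `volume_ne_zero_of_energy`). By Fatou's lemma there is `x ∈ K` for which the
`L²` norms of the projection stay bounded along a sequence of scales tending to zero. By the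
Cauchy–Schwarz inequality such a measure is not carried by a null set, whence `|Π^x(K)| > 0`.
-/

open MeasureTheory
open scoped RealInnerProductSpace ENNReal

/-- The pinned dot product set `Π^x(E) = {x · y : y ∈ E}`. -/
def pinnedDotSet {d : ℕ} (x : EuclideanSpace ℝ (Fin d))
    (E : Set (EuclideanSpace ℝ (Fin d))) : Set ℝ :=
  {t | ∃ y ∈ E, ⟪x, y⟫ = t}

set_option linter.unusedSectionVars false

noncomputable section

open Filter Topology Set

/-! ### Frostman's lemma -/

/-- The `s`-dimensional Hausdorff content: the infimum of `∑ diam(tₙ)^s` over all countable covers,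
with no restriction on the diameters. -/
def hausdorffContent (X : Type*) [EMetricSpace X] (s : ℝ) (hs : 0 < s) : OuterMeasure X :=
  OuterMeasure.ofFunction (fun A => Metric.ediam A ^ s) (by simp [hs])

lemma hausdorffContent_le {X : Type*} [EMetricSpace X] {s : ℝ} (hs : 0 < s) (A : Set X) :
    hausdorffContent X s hs A ≤ Metric.ediam A ^ s :=
  OuterMeasure.ofFunction_le _

/-- A cover with small total `∑ diam^s` consists of sets of small diameter, so null content forces
null Hausdorff measure. -/
lemma hausdorffMeasure_eq_zero_of_content {X : Type*} [EMetricSpace X] [MeasurableSpace X]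
    [BorelSpace X] {s : ℝ} (hs : 0 < s) {A : Set X}
    (h : hausdorffContent X s hs A = 0) : μH[s] A = 0 := by
  rw [Measure.hausdorffMeasure_apply]
  simp only [ENNReal.iSup_eq_zero]
  intro r hr
  refine le_antisymm (ENNReal.le_of_forall_pos_le_add ?_) (zero_le)
  intro ε hε _
  have hpos : 0 < min (ε : ℝ≥0∞) (r ^ s) := lt_min (by exact_mod_cast hε)
    (ENNReal.rpow_pos_of_nonneg hr hs.le)
  rw [← h] at hpos
  simp only [hausdorffContent, OuterMeasure.ofFunction_apply, iInf_lt_iff] at hpos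
  obtain ⟨t, ht, hlt⟩ := hpos
  have hd : ∀ n, Metric.ediam (t n) ≤ r := by
    intro n
    have h1 : Metric.ediam (t n) ^ s ≤ r ^ s :=
      (ENNReal.le_tsum n).trans (hlt.le.trans (min_le_right _ _))
    exact (ENNReal.rpow_le_rpow_iff hs).1 h1
  rw [zero_add]
  refine iInf_le_of_le t (iInf_le_of_le ht (iInf_le_of_le hd ?_))
  refine le_trans (ENNReal.tsum_le_tsum fun n => ?_) (hlt.le.trans (min_le_left _ _))
  exact iSup_le fun _ => le_rfl

/-- One step of the mass distribution: the mass which `μ` gives to each cell of the coarse partition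
`π ∘ q` is redistributed among the cells of the finer partition `q`, proportionally to the content
`M`; by subadditivity of `M` the bound `μ ≤ M` on cells is inherited by the finer cells. -/
lemma frostman_step {X κ κ' : Type*} [MeasurableSpace X] [Countable κ] [MeasurableSpace κ]
    [MeasurableSingletonClass κ] [MeasurableSpace κ'] [MeasurableSingletonClass κ'] [Nonempty X]
    (K : Set X) (hKm : MeasurableSet K) (M : OuterMeasure X) (hM : M K ≠ ∞) (q : X → κ)
    (hq : Measurable q) (π : κ → κ') (hπ : Measurable π)
    (hfin : (q '' K).Finite) (μ : Measure X)
    (hμ : ∀ j, μ ((π ∘ q) ⁻¹' {j}) ≤ M (K ∩ (π ∘ q) ⁻¹' {j})) :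
    ∃ μ' : Measure X, μ' Kᶜ = 0 ∧ (∀ j, μ' ((π ∘ q) ⁻¹' {j}) = μ ((π ∘ q) ⁻¹' {j})) ∧
      ∀ k, μ' (q ⁻¹' {k}) ≤ M (K ∩ q ⁻¹' {k}) := by
  classical
  set c : κ → ℝ≥0∞ := fun k => M (K ∩ q ⁻¹' {k}) with hc
  have hc0 : ∀ k, k ∉ q '' K → c k = 0 := by
    intro k hk
    have : K ∩ q ⁻¹' {k} = ∅ := by
      ext x; simp only [mem_inter_iff, mem_preimage, mem_singleton_iff, mem_empty_iff_false,
        iff_false, not_and]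
      exact fun hx h => hk ⟨x, hx, h⟩
    simp [hc, this]
  set S : κ' → ℝ≥0∞ := fun j => ∑' k, if π k = j then c k else 0 with hS
  have hSfin : ∀ j, S j ≠ ∞ := by
    intro j
    have : S j = ∑ k ∈ hfin.toFinset, if π k = j then c k else 0 := by
      refine tsum_eq_sum fun k hk => ?_
      simp only [Finite.mem_toFinset] at hk
      simp [hc0 k hk]
    rw [this]
    refine (ENNReal.sum_lt_top.2 fun k _ => ?_).ne
    split_ifs
    · exact (measure_mono inter_subset_left).trans_lt hM.lt_top
    · simp
  have hMS : ∀ j, M (K ∩ (π ∘ q) ⁻¹' {j}) ≤ S j := by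
    intro j
    have : K ∩ (π ∘ q) ⁻¹' {j} ⊆ ⋃ k, (if π k = j then K ∩ q ⁻¹' {k} else ∅) := by
      rintro x ⟨hx, hj⟩
      refine mem_iUnion.2 ⟨q x, ?_⟩
      have : π (q x) = j := hj
      simp [this, hx]
    refine (measure_mono this).trans ((measure_iUnion_le _).trans (ENNReal.tsum_le_tsum fun k => ?_))
    split_ifs <;> simp [hc]
  set w : κ → ℝ≥0∞ := fun k => μ ((π ∘ q) ⁻¹' {π k}) * (c k / S (π k)) with hw
  have hp : ∀ k, ∃ x, (K ∩ q ⁻¹' {k}).Nonempty → x ∈ K ∩ q ⁻¹' {k} := by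
    intro k
    by_cases h : (K ∩ q ⁻¹' {k}).Nonempty
    · exact ⟨h.some, fun _ => h.some_mem⟩
    · exact ⟨Classical.arbitrary X, fun h' => absurd h' h⟩
  choose p hp using hp
  have hpw : ∀ k, w k ≠ 0 → p k ∈ K ∩ q ⁻¹' {k} := by
    intro k hk
    apply hp
    by_contra hne
    rw [not_nonempty_iff_eq_empty] at hne
    exact hk (by simp [hw, hc, hne])
  have happ : ∀ A, MeasurableSet A →
      (Measure.sum fun k => w k • Measure.dirac (p k)) A = ∑' k, w k * A.indicator 1 (p k) := by
    intro A hA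
    rw [Measure.sum_apply _ hA]
    simp [hA]
  have hcell : ∀ B : Set κ, MeasurableSet B →
      (Measure.sum fun k => w k • Measure.dirac (p k)) (q ⁻¹' B) = ∑' k, if k ∈ B then w k else 0 := by
    intro B hB
    rw [happ _ (hq hB)]
    refine tsum_congr fun k => ?_
    by_cases hk : w k = 0
    · simp [hk]
    · have := (hpw k hk).2
      simp only [mem_preimage, mem_singleton_iff] at this
      simp [indicator, this]
  refine ⟨Measure.sum fun k => w k • Measure.dirac (p k), ?_, ?_, ?_⟩
  · rw [happ _ hKm.compl, ENNReal.tsum_eq_zero]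
    intro k
    by_cases hk : w k = 0
    · simp [hk]
    · simp [(hpw k hk).1]
  · intro j
    have := hcell (π ⁻¹' {j}) (hπ (measurableSet_singleton j))
    rw [preimage_comp, this]
    have h1 : ∀ k, (if k ∈ π ⁻¹' {j} then w k else 0)
        = μ ((π ∘ q) ⁻¹' {j}) / S j * (if π k = j then c k else 0) := by
      intro k
      by_cases hk : π k = j
      · simp [hk, hw, div_eq_mul_inv]; ring
      · simp [hk]
    simp_rw [h1]
    rw [ENNReal.tsum_mul_left]
    by_cases h0 : S j = 0
    · have : μ ((π ∘ q) ⁻¹' {j}) = 0 := le_antisymm (((hμ j).trans (hMS j)).trans h0.le) (zero_le)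
      rw [← preimage_comp, this]; simp
    · exact ENNReal.div_mul_cancel h0 (hSfin j)
  · intro k
    rw [hcell _ (measurableSet_singleton k)]
    simp only [mem_singleton_iff, tsum_ite_eq]
    by_cases h0 : S (π k) = 0
    · have : c k = 0 := by
        rw [hS, ENNReal.tsum_eq_zero] at h0
        simpa using h0 k
      simp [hw, this]
    · calc w k ≤ S (π k) * (c k / S (π k)) := by
            exact mul_le_mul_left ((hμ _).trans (hMS _)) _
        _ = c k := ENNReal.mul_div_cancel h0 (hSfin _)

/-- The index of the half-open dyadic cube of side `2⁻ⁿ` containing `x`. -/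
def dyadicIndex {d : ℕ} (n : ℕ) (x : EuclideanSpace ℝ (Fin d)) : Fin d → ℤ :=
  fun i => ⌊(2 : ℝ) ^ n * x i⌋

/-- The index of the dyadic cube one level up. -/
def dyadicParent {d : ℕ} (k : Fin d → ℤ) : Fin d → ℤ := fun i => k i / 2

lemma dyadicParent_comp {d : ℕ} (n : ℕ) :
    (dyadicParent ∘ dyadicIndex (d := d) (n + 1)) = dyadicIndex n := by
  funext x i
  simp only [Function.comp, dyadicParent, dyadicIndex]
  have h := Int.floor_div_natCast ((2 : ℝ) ^ (n + 1) * x i) 2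
  have h2 : (2 : ℝ) ^ (n + 1) * x i / ((2 : ℕ) : ℝ) = 2 ^ n * x i := by
    push_cast; rw [pow_succ]; ring
  rw [h2] at h
  rw [h]; rfl

lemma measurable_dyadicIndex {d : ℕ} (n : ℕ) : Measurable (dyadicIndex (d := d) n) := by
  unfold dyadicIndex
  refine measurable_pi_lambda _ fun i => Int.measurable_floor.comp ?_
  exact Continuous.measurable (by fun_prop)

/-- Coarser dyadic cells are unions of finer ones. -/
lemma dyadicIndex_coarse {d : ℕ} (m n : ℕ) (h : m ≤ n) :
    ∃ g : (Fin d → ℤ) → (Fin d → ℤ), dyadicIndex (d := d) m = g ∘ dyadicIndex n := by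
  induction n, h using Nat.le_induction with
  | base => exact ⟨id, rfl⟩
  | succ n _ ih =>
    obtain ⟨g, hg⟩ := ih
    exact ⟨g ∘ dyadicParent, by rw [hg, Function.comp_assoc, dyadicParent_comp]⟩

lemma finite_dyadicIndex_image {d : ℕ} (n : ℕ) (x : EuclideanSpace ℝ (Fin d)) (R : ℝ) :
    dyadicIndex n '' Metric.closedBall x R ⊆
      Set.pi univ fun i => Set.Icc ⌊(2 : ℝ) ^ n * (x i - R)⌋ ⌊(2 : ℝ) ^ n * (x i + R)⌋ := by
  rintro _ ⟨y, hy, rfl⟩ i _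
  have h1 : |y i - x i| ≤ R := by
    have := PiLp.norm_apply_le (y - x) i
    rw [mem_closedBall_iff_norm] at hy
    exact le_trans (by simpa using this) hy
  rw [abs_le] at h1
  constructor
  · exact Int.floor_le_floor (by gcongr; linarith)
  · exact Int.floor_le_floor (by gcongr; linarith)

/-- A ball of radius at most `2⁻ⁿ` meets at most `3^d` dyadic cubes of side `2⁻ⁿ`. -/
lemma exists_dyadic_cover {d : ℕ} (n : ℕ) (x : EuclideanSpace ℝ (Fin d)) (r : ℝ)
    (hr : r ≤ ((2 : ℝ) ^ n)⁻¹) :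
    ∃ T : Finset (Fin d → ℤ), T.card ≤ 3 ^ d ∧
      Metric.ball x r ⊆ ⋃ k ∈ T, dyadicIndex n ⁻¹' {k} := by
  classical
  refine ⟨Fintype.piFinset fun i => Finset.Icc (⌊(2 : ℝ) ^ n * x i⌋ - 1) (⌊(2 : ℝ) ^ n * x i⌋ + 1),
    ?_, ?_⟩
  · rw [Fintype.card_piFinset]
    simp only [Int.card_Icc]
    have : ∀ a : ℤ, (a + 1 + 1 - (a - 1)).toNat = 3 := by intro a; ring_nf; rfl
    simp [this]
  · intro y hy
    have hy' := finite_dyadicIndex_image n x ((2 : ℝ) ^ n)⁻¹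
      ⟨y, Metric.closedBall_subset_closedBall hr (Metric.ball_subset_closedBall hy), rfl⟩
    simp only [mem_iUnion, mem_preimage, mem_singleton_iff, exists_prop, exists_eq_right']
    rw [Fintype.mem_piFinset]
    intro i
    have := hy' i trivial
    beta_reduce at this
    have h2 : (2 : ℝ) ^ n * ((2 : ℝ) ^ n)⁻¹ = 1 := mul_inv_cancel₀ (by positivity)
    rw [mul_sub, mul_add, h2, Int.floor_sub_one, Int.floor_add_one] at this
    exact Finset.mem_Icc.2 this

lemma ediam_dyadic_le {d : ℕ} (n : ℕ) (k : Fin d → ℤ) :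
    Metric.ediam (dyadicIndex n ⁻¹' {k} : Set (EuclideanSpace ℝ (Fin d))) ≤
      ENNReal.ofReal (√d * ((2 : ℝ) ^ n)⁻¹) := by
  refine Metric.ediam_le fun x hx y hy => ?_
  rw [edist_dist]
  apply ENNReal.ofReal_le_ofReal
  rw [EuclideanSpace.dist_eq]
  have key : ∀ i, dist (x i) (y i) ≤ ((2 : ℝ) ^ n)⁻¹ := by
    intro i
    have h1 : ⌊(2 : ℝ) ^ n * x i⌋ = ⌊(2 : ℝ) ^ n * y i⌋ := by
      have ha : dyadicIndex n x i = k i := by rw [show dyadicIndex n x = k from hx]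
      have hb : dyadicIndex n y i = k i := by rw [show dyadicIndex n y = k from hy]
      exact ha.trans hb.symm
    have h2 := Int.abs_sub_lt_one_of_floor_eq_floor h1
    rw [← mul_sub, abs_mul, abs_of_pos (by positivity : (0 : ℝ) < 2 ^ n)] at h2
    rw [Real.dist_eq, ← one_div, le_div_iff₀ (by positivity)]
    linarith
  calc √(∑ i, dist (x i) (y i) ^ 2) ≤ √(∑ _i : Fin d, (((2 : ℝ) ^ n)⁻¹) ^ 2) := by
        apply Real.sqrt_le_sqrt
        gcongr with i _
        exact key i
    _ = √d * ((2 : ℝ) ^ n)⁻¹ := by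
        rw [Finset.sum_const, Finset.card_univ, Fintype.card_fin, nsmul_eq_mul,
          Real.sqrt_mul (by positivity), Real.sqrt_sq (by positivity)]

/-- The mass distribution carried out down to level `n`: a measure on `K` of total mass `M K` which is
dominated by `M` on all dyadic cubes of side at least `2⁻ⁿ`. -/
lemma frostman_level {d : ℕ} (K : Set (EuclideanSpace ℝ (Fin d))) (hK : IsCompact K)
    (M : OuterMeasure (EuclideanSpace ℝ (Fin d))) (hM : M K ≠ ∞) (n : ℕ) :
    ∃ μ : Measure (EuclideanSpace ℝ (Fin d)), μ Kᶜ = 0 ∧ μ univ = M K ∧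
      ∀ m ≤ n, ∀ k, μ (dyadicIndex m ⁻¹' {k}) ≤ M (K ∩ dyadicIndex m ⁻¹' {k}) := by
  have hfin : ∀ n, (dyadicIndex n '' K).Finite := by
    intro n
    obtain ⟨R, hR⟩ := hK.isBounded.subset_closedBall 0
    refine Set.Finite.subset ?_ ((image_mono hR).trans (finite_dyadicIndex_image n 0 R))
    exact Set.Finite.pi fun i => Set.finite_Icc _ _
  induction n with
  | zero =>
    have hpre : ∀ j, ((fun _ : Fin d → ℤ => ()) ∘ dyadicIndex (d := d) 0) ⁻¹' {j} = univ := by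
      intro j; ext; simp
    obtain ⟨μ, h1, h2, h3⟩ := frostman_step K hK.measurableSet M hM (dyadicIndex 0)
      (measurable_dyadicIndex 0) (fun _ => ()) measurable_const (hfin 0)
      (M K • Measure.dirac 0) (by
        intro j
        simp [hpre])
    refine ⟨μ, h1, ?_, ?_⟩
    · have := h2 ()
      rw [hpre] at this
      simpa using this
    · intro m hm k
      obtain rfl : m = 0 := by omega
      exact h3 k
  | succ n ih =>
    obtain ⟨μ, h1, h2, h3⟩ := ih
    obtain ⟨μ', h1', h2', h3'⟩ := frostman_step K hK.measurableSet M hM (dyadicIndex (n + 1))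
      (measurable_dyadicIndex _) dyadicParent (Measurable.of_discrete) (hfin _) μ (by
        intro j
        rw [dyadicParent_comp]
        exact h3 n le_rfl j)
    rw [dyadicParent_comp] at h2'
    have hmap : Measure.map (dyadicIndex n) μ' = Measure.map (dyadicIndex n) μ := by
      refine Measure.ext_of_singleton fun j => ?_
      rw [Measure.map_apply (measurable_dyadicIndex n) (measurableSet_singleton j),
        Measure.map_apply (measurable_dyadicIndex n) (measurableSet_singleton j), h2']
    have hpre : ∀ B : Set (Fin d → ℤ), μ' (dyadicIndex n ⁻¹' B) = μ (dyadicIndex n ⁻¹' B) := by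
      intro B
      rw [← Measure.map_apply (measurable_dyadicIndex n) (MeasurableSet.of_discrete),
        ← Measure.map_apply (measurable_dyadicIndex n) (MeasurableSet.of_discrete), hmap]
    refine ⟨μ', h1', ?_, ?_⟩
    · have := hpre univ
      simpa [h2] using this
    · intro m hm k
      rcases Nat.lt_or_ge n m with h | h
      · obtain rfl : m = n + 1 := by omega
        exact h3' k
      · obtain ⟨g, hg⟩ := dyadicIndex_coarse (d := d) m n h
        have h4 := h3 m h k
        rw [hg, preimage_comp] at h4 ⊢
        rw [hpre]
        exact h4

/-- **Frostman's lemma** for compact subsets of Euclidean space. The measure is a weak limit, along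
an ultrafilter, of the normalised level `n` mass distributions for the Hausdorff content. -/
theorem frostman {d : ℕ} (K : Set (EuclideanSpace ℝ (Fin d))) (hK : IsCompact K) {s : ℝ}
    (hs : 0 < s) (hpos : μH[s] K ≠ 0) :
    ∃ μ : Measure (EuclideanSpace ℝ (Fin d)), IsProbabilityMeasure μ ∧ μ Kᶜ = 0 ∧
      ∃ C : ℝ≥0∞, C ≠ ∞ ∧ ∀ x, ∀ r > 0, μ (Metric.closedBall x r) ≤ C * ENNReal.ofReal (r ^ s) := by
  set M := hausdorffContent (EuclideanSpace ℝ (Fin d)) s hs with hMdef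
  have hM0 : M K ≠ 0 := fun h => hpos (hausdorffMeasure_eq_zero_of_content hs h)
  have hMt : M K ≠ ∞ := by
    refine ((hausdorffContent_le hs K).trans_lt ?_).ne
    exact ENNReal.rpow_lt_top_of_nonneg hs.le hK.isBounded.ediam_ne_top
  choose μ hμK hμu hμ using frostman_level K hK M hMt
  let P : ℕ → ProbabilityMeasure (EuclideanSpace ℝ (Fin d)) := fun n =>
    ⟨(M K)⁻¹ • μ n, ⟨by simp [hμu, ENNReal.inv_mul_cancel hM0 hMt]⟩⟩
  have hP : ∀ n A, (P n : Measure (EuclideanSpace ℝ (Fin d))) A = (M K)⁻¹ * μ n A := by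
    intro n A; rfl
  have hcomp : IsCompact (closure (range P)) := by
    apply isCompact_closure_of_isTightMeasureSet
    rw [isTightMeasureSet_iff_exists_isCompact_measure_compl_le]
    intro ε hε
    refine ⟨K, hK, ?_⟩
    rintro _ ⟨_, ⟨n, rfl⟩, rfl⟩
    rw [hP, hμK]; simp
  obtain ⟨ν, -, hν⟩ := hcomp.ultrafilter_le_nhds' ((hyperfilter ℕ).map P)
    (by
      rw [Ultrafilter.mem_map]
      exact Filter.univ_mem' fun n => subset_closure (mem_range_self n))
  have hlim : Tendsto P (hyperfilter ℕ : Filter ℕ) (𝓝 ν) := hν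
  have hopen : ∀ (G : Set (EuclideanSpace ℝ (Fin d))) (b : ℝ≥0∞), IsOpen G →
      (∀ᶠ n in atTop, μ n G ≤ b) → (ν : Measure (EuclideanSpace ℝ (Fin d))) G ≤ (M K)⁻¹ * b := by
    intro G b hG h
    refine (ProbabilityMeasure.le_liminf_measure_open_of_tendsto hlim hG).trans ?_
    refine liminf_le_of_frequently_le' (Eventually.frequently ?_)
    have h' : ∀ᶠ n in (hyperfilter ℕ : Filter ℕ), μ n G ≤ b := by
      have := Nat.hyperfilter_le_atTop
      exact this h
    filter_upwards [h'] with n hn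
    rw [hP]
    gcongr
  refine ⟨ν, inferInstance, ?_, ?_⟩
  · refine le_antisymm ?_ (zero_le)
    refine (hopen Kᶜ 0 hK.isClosed.isOpen_compl (Eventually.of_forall fun n => (hμK n).le)).trans ?_
    simp
    -- for `2⁻ᵐ⁻¹ < ρ ≤ 2⁻ᵐ` each of the `3^d` cubes of side `2⁻ᵐ` has `μ n`-mass at most `(√d 2⁻ᵐ)^s`
  · have hball : ∀ x, ∀ ρ > 0, ρ ≤ 1 → (ν : Measure (EuclideanSpace ℝ (Fin d))) (Metric.ball x ρ) ≤
        (M K)⁻¹ * (3 ^ d * ENNReal.ofReal ((√d * 2) ^ s * ρ ^ s)) := by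
      intro x ρ hρ hρ1
      apply hopen _ _ Metric.isOpen_ball
      obtain ⟨m, hm1, hm2⟩ := exists_nat_pow_near_of_lt_one hρ hρ1 (by norm_num : (0 : ℝ) < 1 / 2)
        (by norm_num)
      rw [one_div_pow, one_div] at hm1 hm2
      obtain ⟨T, hT, hcov⟩ := exists_dyadic_cover m x ρ hm2
      filter_upwards [eventually_ge_atTop m] with n hn
      calc μ n (Metric.ball x ρ) ≤ ∑ k ∈ T, μ n (dyadicIndex m ⁻¹' {k}) :=
            (measure_mono hcov).trans (measure_biUnion_finset_le _ _)
        _ ≤ ∑ k ∈ T, ENNReal.ofReal ((√d * 2) ^ s * ρ ^ s) := by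
            refine Finset.sum_le_sum fun k _ => ?_
            refine (hμ n m hn k).trans ((hausdorffContent_le hs _).trans ?_)
            calc _ ≤ (ENNReal.ofReal (√d * ((2 : ℝ) ^ m)⁻¹)) ^ s :=
                  ENNReal.rpow_le_rpow ((Metric.ediam_mono inter_subset_right).trans
                    (ediam_dyadic_le m k)) hs.le
              _ = ENNReal.ofReal ((√d * ((2 : ℝ) ^ m)⁻¹) ^ s) :=
                  ENNReal.ofReal_rpow_of_nonneg (by positivity) hs.le
              _ ≤ _ := by
                  apply ENNReal.ofReal_le_ofReal
                  rw [← Real.mul_rpow (by positivity) hρ.le]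
                  apply Real.rpow_le_rpow (by positivity) _ hs.le
                  rw [mul_assoc]
                  gcongr
                  rw [pow_succ, mul_inv] at hm1
                  linarith
        _ ≤ 3 ^ d * ENNReal.ofReal ((√d * 2) ^ s * ρ ^ s) := by
            rw [Finset.sum_const, nsmul_eq_mul]
            gcongr
            exact_mod_cast hT
    refine ⟨(M K)⁻¹ * (3 ^ d * ENNReal.ofReal ((√d * 2) ^ s * 2 ^ s)) + ENNReal.ofReal (2 ^ s),
      ?_, ?_⟩
    · have : (M K)⁻¹ ≠ ∞ := ENNReal.inv_ne_top.2 hM0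
      finiteness
    · intro x r hr
      rw [add_mul]
      rcases le_or_gt (2 * r) 1 with h | h
      · refine le_add_right ?_
        refine (measure_mono (Metric.closedBall_subset_ball (by linarith : r < 2 * r))).trans ?_
        refine (hball x (2 * r) (by linarith) h).trans (le_of_eq ?_)
        rw [Real.mul_rpow (by norm_num) hr.le, ← mul_assoc ((√d * 2) ^ s),
          ENNReal.ofReal_mul (by positivity)]
        ring
      · refine le_add_left ?_
        rw [← ENNReal.ofReal_mul (by positivity), ← Real.mul_rpow (by norm_num) hr.le]
        refine prob_le_one.trans ?_
        rw [← ENNReal.ofReal_one]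
        exact ENNReal.ofReal_le_ofReal (Real.one_le_rpow h.le hs.le)

/-! ### Transversality -/

/-- If `v` is orthogonal to `x - x'` and transversal to `x'`, then `x` is quantitatively far from
the whole line `ℝ x'`. -/
lemma transversal_bound {V : Type*} [NormedAddCommGroup V] [InnerProductSpace ℝ V]
    {x x' v : V} {m A B : ℝ} (hm : 0 < m) (horth : ⟪x - x', v⟫ = 0) (hv : m ≤ |⟪x', v⟫|)
    (hA : ‖v‖ ≤ A) (hB : ‖x'‖ ≤ B) (τ : ℝ) :
    m / (m + A * B) * ‖x - x'‖ ≤ ‖x - τ • x'‖ := by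
  have hA0 : 0 ≤ A := (norm_nonneg _).trans hA
  have hB0 : 0 ≤ B := (norm_nonneg _).trans hB
  set w := x - τ • x' with hw
  have hx : x - x' = w + (τ - 1) • x' := by rw [hw, sub_smul, one_smul]; abel
  have h1 : ⟪w, v⟫ + (τ - 1) * ⟪x', v⟫ = 0 := by
    rw [hx, inner_add_left, real_inner_smul_left] at horth; exact horth
  have h2 : |τ - 1| * m ≤ ‖w‖ * A := by
    calc |τ - 1| * m ≤ |τ - 1| * |⟪x', v⟫| := by gcongr
      _ = |⟪w, v⟫| := by rw [← abs_mul, ← abs_neg]; congr 1; linarith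
      _ ≤ ‖w‖ * ‖v‖ := abs_real_inner_le_norm _ _
      _ ≤ ‖w‖ * A := by gcongr
  have h3 : ‖x - x'‖ ≤ ‖w‖ + |τ - 1| * B := by
    rw [hx]
    refine (norm_add_le _ _).trans ?_
    rw [norm_smul, Real.norm_eq_abs]
    gcongr
  rw [div_mul_eq_mul_div, div_le_iff₀ (by positivity)]
  calc m * ‖x - x'‖ ≤ m * (‖w‖ + |τ - 1| * B) := by gcongr
    _ = m * ‖w‖ + (|τ - 1| * m) * B := by ring
    _ ≤ m * ‖w‖ + (‖w‖ * A) * B := by gcongr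
    _ = _ := by ring

/-- A set of large dimension on a translated sphere contains a compact piece of large dimension,
away from the origin, on which passing to lines through the origin is bi-Lipschitz. The piece is
either a small neighbourhood of a point where the line through the origin crosses the sphere
transversally, or it consists of points of tangency; the latter lie on a hyperplane `⟪x, a⟫ = ρ`. -/
lemma exists_good_piece {V : Type*} [NormedAddCommGroup V] [InnerProductSpace ℝ V]
    [SecondCountableTopology V] (a : V) (E : Set V) (hE : ∀ x ∈ E, ‖x - a‖ = 1)
    (hEc : IsCompact E) {r : ℝ≥0∞} (hr : r < dimH E) :
    ∃ K ⊆ E, IsCompact K ∧ r < dimH K ∧ ∃ c > 0, (∀ x ∈ K, c ≤ ‖x‖) ∧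
      ∀ x ∈ K, ∀ x' ∈ K, ∀ τ : ℝ, c * ‖x - x'‖ ≤ ‖x - τ • x'‖ := by
  obtain ⟨B, hB⟩ := hEc.isBounded.exists_norm_le
  set T : Set V := {x ∈ E | ⟪x, x - a⟫ = 0} with hT
  have hcover : E = T ∪ (E \ T) := by rw [union_sdiff_cancel]; exact fun x hx => hx.1
  rw [hcover, dimH_union, lt_max_iff] at hr
  rcases hr with hr | hr
    -- on the tangency locus `‖x‖² = ⟪x, a⟫ = ‖a‖² - 1`
  · have hTc : IsCompact T := by
      have : T = E ∩ {x | ⟪x, x - a⟫ = 0} := rfl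
      rw [this]
      exact hEc.inter_right (isClosed_eq (by fun_prop) continuous_const)
    have hTa : ∀ x ∈ T, ⟪x, a⟫ = ‖x‖ ^ 2 ∧ ‖x‖ ^ 2 = ‖a‖ ^ 2 - 1 := by
      intro x hx
      have h1 : ⟪x, a⟫ = ‖x‖ ^ 2 := by
        have := hx.2
        rw [inner_sub_right, real_inner_self_eq_norm_sq] at this
        linarith
      refine ⟨h1, ?_⟩
      have h2 := norm_sub_sq_real x a
      rw [hE x hx.1, h1] at h2
      linarith
    have hρ : 0 < ‖a‖ ^ 2 - 1 := by
      by_contra hneg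
      have : T ⊆ {0} := by
        intro x hx
        have h2 := (hTa x hx).2
        have : ‖x‖ ^ 2 = 0 := le_antisymm (by linarith) (by positivity)
        simpa using this
      have := (dimH_mono this).trans (dimH_singleton (0 : V)).le
      exact absurd (hr.trans_le this) (by simp)
    refine ⟨T, fun x hx => hx.1, hTc, hr, ?_⟩
    have hB0 : T.Nonempty := by
      by_contra h
      rw [not_nonempty_iff_eq_empty] at h
      simp [h] at hr
    obtain ⟨x0, hx0⟩ := hB0
    have hB0 : 0 ≤ B := (norm_nonneg _).trans (hB x0 hx0.1)
    set ρ := ‖a‖ ^ 2 - 1 with hρdef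
    refine ⟨min (√ρ) (ρ / (ρ + ‖a‖ * B)), lt_min (Real.sqrt_pos.2 hρ) (by positivity), ?_, ?_⟩
    · intro x hx
      refine (min_le_left _ _).trans ?_
      rw [← (hTa x hx).2, Real.sqrt_sq (norm_nonneg _)]
    · intro x hx x' hx' τ
      refine le_trans (mul_le_mul_of_nonneg_right (min_le_right _ _) (norm_nonneg _)) ?_
      refine transversal_bound (v := a) hρ ?_ ?_ le_rfl (hB x' hx'.1) τ
      · rw [inner_sub_left, (hTa x hx).1, (hTa x' hx').1, (hTa x hx).2, (hTa x' hx').2, sub_self]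
      · rw [(hTa x' hx').1, (hTa x' hx').2]; exact le_abs_self _
  · obtain ⟨p, hp, hpn⟩ := exists_mem_nhdsWithin_lt_dimH_of_lt_dimH hr
    have hpm : 0 < |⟪p, p - a⟫| := abs_pos.2 fun h => hp.2 ⟨hp.1, h⟩
    have hp0 : p ≠ 0 := by rintro rfl; simp at hpm
    set m := |⟪p, p - a⟫| with hm
    -- near `p` the vector `x + y - 2a`, which is orthogonal to `x - y`, stays transversal to `y`
    have hev : ∀ᶠ z : V × V in 𝓝 (p, p), m < |⟪z.2, z.1 + z.2 - (2 : ℝ) • a⟫| := by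
      have hcont : Continuous fun z : V × V => |⟪z.2, z.1 + z.2 - (2 : ℝ) • a⟫| := by fun_prop
      refine hcont.continuousAt.eventually (lt_mem_nhds ?_)
      have : p + p - (2 : ℝ) • a = (2 : ℝ) • (p - a) := by rw [smul_sub, two_smul ℝ p]
      simp only [this]
      rw [real_inner_smul_right, abs_mul, ← hm, abs_two]
      linarith
    rw [nhds_prod_eq, Filter.Eventually, Filter.mem_prod_self_iff] at hev
    obtain ⟨U, hU, hUsub⟩ := hev
    have hev2 : ∀ᶠ z : V in 𝓝 p, ‖p‖ / 2 < ‖z‖ :=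
      continuous_norm.continuousAt.eventually (lt_mem_nhds (by
        have := norm_pos_iff.2 hp0; linarith))
    obtain ⟨ε, hε, hball⟩ := Metric.nhds_basis_closedBall.mem_iff.1 (inter_mem hU hev2)
    have hB0 : 0 ≤ B := (norm_nonneg _).trans (hB p hp.1)
    refine ⟨E ∩ Metric.closedBall p ε, inter_subset_left,
      hEc.inter_right Metric.isClosed_closedBall, ?_, min (‖p‖ / 2) (m / (m + 2 * B)),
      lt_min (by have := norm_pos_iff.2 hp0; linarith) (by positivity), ?_, ?_⟩
    · have : (E \ T) ∩ Metric.closedBall p ε ∈ 𝓝[E \ T] p := by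
        exact inter_mem self_mem_nhdsWithin
          (mem_nhdsWithin_of_mem_nhds (Metric.closedBall_mem_nhds p hε))
      exact (hpn _ this).trans_le (dimH_mono (inter_subset_inter_left _ sdiff_subset))
    · intro x hx
      exact (min_le_left _ _).trans (hball hx.2).2.le
    · intro x hx x' hx' τ
      refine le_trans (mul_le_mul_of_nonneg_right (min_le_right _ _) (norm_nonneg _)) ?_
      refine transversal_bound (v := x + x' - (2 : ℝ) • a) hpm ?_ ?_ ?_ (hB x' hx'.1) τ
      · have h1 : x - x' = (x - a) - (x' - a) := by abel
        have h2 : x + x' - (2 : ℝ) • a = (x - a) + (x' - a) := by rw [two_smul]; abel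
        rw [h1, h2, real_inner_comm, real_inner_add_sub_eq_zero_iff, hE x hx.1, hE x' hx'.1]
      · exact le_of_lt (hUsub (mk_mem_prod (hball hx.2).1 (hball hx'.2).1))
      · have h2 : x + x' - (2 : ℝ) • a = (x - a) + (x' - a) := by rw [two_smul]; abel
        rw [h2]
        refine (norm_add_le _ _).trans ?_
        rw [hE x hx.1, hE x' hx'.1]; norm_num

/-! ### A criterion for positive length -/

/-- A finite measure on the line with bounded smoothed `L²` norm along a sequence of scales cannot
be carried by a compact null set: by Cauchy–Schwarz,
`σ(ℝ)² ≤ e C · |F_δ|`, where `F_δ` is the `δ`-neighbourhood of `F`, for arbitrarily small `δ`. -/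
lemma volume_ne_zero_of_energy (σ : Measure ℝ) [IsFiniteMeasure σ] (hσ : σ univ ≠ 0) (F : Set ℝ)
    (hF : IsCompact F) (hσF : σ Fᶜ = 0) (C : ℝ≥0∞) (hC : C ≠ ∞)
    (hfreq : ∃ᶠ N : ℕ in atTop,
      (N : ℝ≥0∞) * ∫⁻ p, ∫⁻ q, ENNReal.ofReal (Real.exp (-((N : ℝ) * (p - q)) ^ 2)) ∂σ ∂σ ≤ C) :
    volume F ≠ 0 := by
  intro hvol
  have key : ∀ N : ℕ, 0 < N →
      (N : ℝ≥0∞) * ∫⁻ p, ∫⁻ q, ENNReal.ofReal (Real.exp (-((N : ℝ) * (p - q)) ^ 2)) ∂σ ∂σ ≤ C →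
      (σ univ) ^ 2 ≤ volume (Metric.cthickening (1 / (2 * N : ℝ)) F) *
        (ENNReal.ofReal (Real.exp 1) * C) := by
    intro N hN hNC
    have hN' : (0 : ℝ) < N := by exact_mod_cast hN
    set δ : ℝ := 1 / (2 * N : ℝ) with hδ
    have hδ0 : 0 < δ := by positivity
    set S : Set (ℝ × ℝ) := {z | |z.1 - z.2| ≤ δ} with hS
    have hSm : MeasurableSet S := (isClosed_le (by fun_prop) continuous_const).measurableSet
    set φ : ℝ → ℝ≥0∞ := fun p => ∫⁻ q, S.indicator 1 (p, q) ∂σ with hφ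
    have hIm : Measurable (S.indicator (1 : ℝ × ℝ → ℝ≥0∞)) := measurable_one.indicator hSm
    have hφm : Measurable φ := hIm.lintegral_prod_right'
    have hslice : ∀ q, ∫⁻ p, S.indicator (1 : ℝ × ℝ → ℝ≥0∞) (p, q) = ENNReal.ofReal (2 * δ) := by
      intro q
      have : (fun p => S.indicator (1 : ℝ × ℝ → ℝ≥0∞) (p, q))
          = (Metric.closedBall q δ).indicator 1 := by
        funext p
        simp [indicator, hS, Real.dist_eq]
      rw [this, lintegral_indicator_one measurableSet_closedBall, Real.volume_closedBall]
    have h1 : ∫⁻ p, φ p = ENNReal.ofReal (2 * δ) * σ univ := by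
      simp only [hφ]
      rw [lintegral_lintegral_swap (f := fun p q => S.indicator (1 : ℝ × ℝ → ℝ≥0∞) (p, q))
        hIm.aemeasurable]
      simp [hslice]
    have h2 : ∫⁻ p, φ p ^ 2 ≤ ENNReal.ofReal (2 * δ) *
        ∫⁻ p, ∫⁻ q, ENNReal.ofReal (Real.exp 1) *
          ENNReal.ofReal (Real.exp (-((N : ℝ) * (p - q)) ^ 2)) ∂σ ∂σ := by
      have e1 : ∀ p, φ p ^ 2 = ∫⁻ q, ∫⁻ q',
          S.indicator (1 : ℝ × ℝ → ℝ≥0∞) (p, q) * S.indicator 1 (p, q') ∂σ ∂σ := by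
        intro p
        rw [sq]
        simp only [hφ]
        rw [← lintegral_mul_const _ (by fun_prop)]
        refine lintegral_congr fun q => ?_
        rw [← lintegral_const_mul _ (by fun_prop)]
      simp_rw [e1]
      rw [lintegral_lintegral_swap]
      swap
      · exact (Measurable.lintegral_prod_right' (f := fun z : (ℝ × ℝ) × ℝ =>
          S.indicator (1 : ℝ × ℝ → ℝ≥0∞) z.1 * S.indicator 1 (z.1.1, z.2))
          (by fun_prop)).aemeasurable
      rw [← lintegral_const_mul]
      swap
      · exact Measurable.lintegral_prod_right' (f := fun z : ℝ × ℝ => ENNReal.ofReal (Real.exp 1) *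
          ENNReal.ofReal (Real.exp (-((N : ℝ) * (z.1 - z.2)) ^ 2))) (by fun_prop)
      refine lintegral_mono fun q => ?_
      rw [lintegral_lintegral_swap, ← lintegral_const_mul _ (by fun_prop)]
      swap
      · exact Measurable.aemeasurable (f := fun z : ℝ × ℝ =>
          S.indicator (1 : ℝ × ℝ → ℝ≥0∞) (z.1, q) * S.indicator 1 (z.1, z.2)) (by fun_prop)
      refine lintegral_mono fun q' => ?_
      by_cases hqq : |q - q'| ≤ 2 * δ
      · calc _ ≤ ∫⁻ p, S.indicator (1 : ℝ × ℝ → ℝ≥0∞) (p, q) := by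
              refine lintegral_mono fun p => ?_
              refine mul_le_of_le_one_right (zero_le) ?_
              exact indicator_le_self' (fun _ _ => zero_le) _
          _ = ENNReal.ofReal (2 * δ) * 1 := by rw [hslice, mul_one]
          _ ≤ _ := by
              gcongr
              rw [← ENNReal.ofReal_mul (by positivity), ← Real.exp_add, ← ENNReal.ofReal_one]
              apply ENNReal.ofReal_le_ofReal
              rw [Real.one_le_exp_iff]
              have h3 : |(N : ℝ) * (q - q')| ≤ 1 := by
                rw [abs_mul, abs_of_pos hN']
                calc (N : ℝ) * |q - q'| ≤ N * (2 * δ) := by gcongr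
                  _ = 1 := by rw [hδ]; field_simp
              have := (sq_le_one_iff_abs_le_one _).2 h3
              linarith
      · have : ∀ p, S.indicator (1 : ℝ × ℝ → ℝ≥0∞) (p, q) * S.indicator 1 (p, q') = 0 := by
          intro p
          by_cases ha : (p, q) ∈ S
          · by_cases hb : (p, q') ∈ S
            · exfalso
              apply hqq
              have := abs_sub_le q p q'
              simp only [hS, mem_ofPred_eq] at ha hb
              rw [abs_sub_comm q p] at this
              linarith
            · simp [hb]
          · simp [ha]
        simp [this]
    have h3 : ∫⁻ p, φ p ^ 2 ≤ (ENNReal.ofReal (2 * δ)) ^ 2 * (ENNReal.ofReal (Real.exp 1) * C) := by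
      refine h2.trans ?_
      have hNN : ENNReal.ofReal (2 * δ) * N = 1 := by
        rw [← ENNReal.ofReal_natCast, ← ENNReal.ofReal_mul (by positivity)]
        have : 2 * δ * N = 1 := by rw [hδ]; field_simp
        rw [this, ENNReal.ofReal_one]
      have e2 : ∀ p, ∫⁻ q, ENNReal.ofReal (Real.exp 1) *
          ENNReal.ofReal (Real.exp (-((N : ℝ) * (p - q)) ^ 2)) ∂σ = ENNReal.ofReal (Real.exp 1) *
          ∫⁻ q, ENNReal.ofReal (Real.exp (-((N : ℝ) * (p - q)) ^ 2)) ∂σ :=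
        fun p => lintegral_const_mul _ (by fun_prop)
      simp_rw [e2]
      rw [lintegral_const_mul _ (Measurable.lintegral_prod_right' (f := fun z : ℝ × ℝ =>
          ENNReal.ofReal (Real.exp (-((N : ℝ) * (z.1 - z.2)) ^ 2))) (by fun_prop))]
      set I := ∫⁻ p, ∫⁻ q, ENNReal.ofReal (Real.exp (-((N : ℝ) * (p - q)) ^ 2)) ∂σ ∂σ
      calc _ = ENNReal.ofReal (2 * δ) * (ENNReal.ofReal (2 * δ) * N) *
            (ENNReal.ofReal (Real.exp 1) * I) := by rw [hNN, mul_one]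
        _ = (ENNReal.ofReal (2 * δ)) ^ 2 * (ENNReal.ofReal (Real.exp 1) * (N * I)) := by ring
        _ ≤ _ := by gcongr
    set T := Metric.cthickening δ F with hT
    have hTm : MeasurableSet T := Metric.isClosed_cthickening.measurableSet
    have h4 : ∀ p, φ p = T.indicator 1 p * φ p := by
      intro p
      by_cases hp : p ∈ T
      · simp [hp]
      · have : φ p = 0 := by
          simp only [hφ]
          rw [lintegral_eq_zero_iff (by fun_prop)]
          have hae : ∀ᵐ q ∂σ, q ∈ F := by
            rw [ae_iff]; exact hσF
          filter_upwards [hae] with q hq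
          simp only [Pi.zero_apply, indicator_apply_eq_zero, hS, mem_ofPred_eq]
          intro hle
          exact absurd (Metric.mem_cthickening_of_dist_le p q δ F hq
            (by rwa [Real.dist_eq])) hp
        simp [this]
    have h5 : (ENNReal.ofReal (2 * δ) * σ univ) ≤
        (volume T) ^ (1 / 2 : ℝ) * (∫⁻ p, φ p ^ 2) ^ (1 / 2 : ℝ) := by
      rw [← h1]
      calc ∫⁻ p, φ p = ∫⁻ p, (T.indicator (1 : ℝ → ℝ≥0∞) * φ) p := lintegral_congr h4
        _ ≤ (∫⁻ p, (T.indicator (1 : ℝ → ℝ≥0∞) p) ^ (2 : ℝ)) ^ (1 / 2 : ℝ) *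
            (∫⁻ p, φ p ^ (2 : ℝ)) ^ (1 / 2 : ℝ) :=
          ENNReal.lintegral_mul_le_Lp_mul_Lq volume Real.HolderConjugate.two_two
            (measurable_one.indicator hTm).aemeasurable hφm.aemeasurable
        _ = _ := by
          have e3 : ∀ p, (T.indicator (1 : ℝ → ℝ≥0∞) p) ^ (2 : ℝ) = T.indicator 1 p := by
            intro p; by_cases hp : p ∈ T <;> simp [hp]
          simp_rw [e3]
          rw [lintegral_indicator_one hTm]
          simp
    have h6 : (ENNReal.ofReal (2 * δ) * σ univ) ^ 2 ≤ volume T * ∫⁻ p, φ p ^ 2 := by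
      calc _ ≤ ((volume T) ^ (1 / 2 : ℝ) * (∫⁻ p, φ p ^ 2) ^ (1 / 2 : ℝ)) ^ 2 := by gcongr
        _ = _ := by
          rw [mul_pow]
          simp only [← ENNReal.rpow_natCast, ← ENNReal.rpow_mul]
          norm_num
    have h7 : (ENNReal.ofReal (2 * δ)) ^ 2 * (σ univ) ^ 2 ≤ (ENNReal.ofReal (2 * δ)) ^ 2 *
        (volume T * (ENNReal.ofReal (Real.exp 1) * C)) := by
      rw [← mul_pow]
      refine h6.trans ?_
      calc _ ≤ volume T * ((ENNReal.ofReal (2 * δ)) ^ 2 * (ENNReal.ofReal (Real.exp 1) * C)) := by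
            gcongr
        _ = _ := by ring
    refine (ENNReal.mul_le_mul_iff_right ?_ ?_).1 h7
    · have : ENNReal.ofReal (2 * δ) ≠ 0 := by simpa using hδ0
      exact pow_ne_zero _ this
    · finiteness
  have hlim : Tendsto (fun N : ℕ => volume (Metric.cthickening (1 / (2 * N : ℝ)) F) *
      (ENNReal.ofReal (Real.exp 1) * C)) atTop (𝓝 0) := by
    have h1 : Tendsto (fun N : ℕ => 1 / (2 * N : ℝ)) atTop (𝓝 0) := by
      have := tendsto_one_div_atTop_nhds_zero_nat.const_mul (1 / 2 : ℝ)
      simp only [mul_zero] at this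
      refine this.congr fun N => ?_
      rw [one_div_mul_one_div]
    have h2 := (tendsto_measure_cthickening_of_isCompact (μ := volume) hF).comp h1
    rw [hvol] at h2
    have := ENNReal.Tendsto.mul_const (b := ENNReal.ofReal (Real.exp 1) * C) h2
      (Or.inr (by finiteness))
    rwa [zero_mul] at this
  have hev := hlim.eventually (gt_mem_nhds (show (0 : ℝ≥0∞) < (σ univ) ^ 2 from
    pos_iff_ne_zero.2 (pow_ne_zero _ hσ)))
  obtain ⟨N, hN, hlt, hpos⟩ := (hfreq.and_eventually (hev.and (eventually_gt_atTop 0))).exists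
  exact absurd (key N hpos hN) (not_le.2 hlt)

/-! ### Gaussian Fourier identities -/

/-- The constant `∑ₖ e^{-k²} (k+1)^s`. -/
def gaussTail (s : ℝ) : ℝ≥0∞ := ∑' k : ℕ, ENNReal.ofReal (Real.exp (-(k : ℝ) ^ 2) * ((k : ℝ) + 1) ^ s)

lemma gaussTail_ne_top (s : ℝ) : gaussTail s ≠ ∞ := by
  obtain ⟨n, hn⟩ := exists_nat_ge s
  have h1 : Summable fun k : ℕ => ((k : ℝ) + 1) ^ n * Real.exp (-1 * ((k : ℝ) + 1)) := by
    have := (summable_nat_add_iff 1).2 (Real.summable_pow_mul_exp_neg_nat_mul n one_pos)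
    simpa using this
  have h2 : Summable fun k : ℕ => Real.exp (-(k : ℝ) ^ 2) * ((k : ℝ) + 1) ^ s := by
    refine Summable.of_nonneg_of_le (fun k => by positivity) (fun k => ?_) (h1.mul_left (Real.exp 1))
    have e1 : Real.exp (-(k : ℝ) ^ 2) ≤ Real.exp 1 * Real.exp (-1 * ((k : ℝ) + 1)) := by
      rw [← Real.exp_add]
      apply Real.exp_le_exp.2
      have : (k : ℝ) ≤ (k : ℝ) ^ 2 := by exact_mod_cast Nat.le_self_pow two_ne_zero k
      linarith
    have e2 : ((k : ℝ) + 1) ^ s ≤ ((k : ℝ) + 1) ^ n := by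
      rw [← Real.rpow_natCast]
      exact Real.rpow_le_rpow_of_exponent_le (by linarith [(Nat.cast_nonneg k : (0 : ℝ) ≤ k)]) hn
    calc _ ≤ (Real.exp 1 * Real.exp (-1 * ((k : ℝ) + 1))) * ((k : ℝ) + 1) ^ n := by gcongr
      _ = _ := by ring
  exact h2.tsum_ofReal_ne_top

/-- Polynomial decay of the sublevel sets of `f` controls the integral of `e^{-f²}`. -/
lemma lintegral_exp_neg_sq_le {X : Type*} [MeasurableSpace X] (μ : Measure X) (f : X → ℝ)
    (hf : Measurable f) (hf0 : ∀ x, 0 ≤ f x) (s : ℝ) (A : ℝ≥0∞)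
    (h : ∀ r > 0, μ {x | f x ≤ r} ≤ A * ENNReal.ofReal (r ^ s)) :
    ∫⁻ x, ENNReal.ofReal (Real.exp (-(f x) ^ 2)) ∂μ ≤ A * gaussTail s := by
  have hm : ∀ k : ℕ, MeasurableSet {x | f x ≤ (k : ℝ) + 1} := fun k =>
    measurableSet_le hf measurable_const
  calc ∫⁻ x, ENNReal.ofReal (Real.exp (-(f x) ^ 2)) ∂μ
      ≤ ∫⁻ x, ∑' k : ℕ, ENNReal.ofReal (Real.exp (-(k : ℝ) ^ 2)) *
          {x | f x ≤ (k : ℝ) + 1}.indicator 1 x ∂μ := by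
        refine lintegral_mono fun x => ?_
        refine le_trans ?_ (ENNReal.le_tsum ⌊f x⌋₊)
        have hx : x ∈ {y | f y ≤ (⌊f x⌋₊ : ℝ) + 1} := (Nat.lt_floor_add_one (f x)).le
        rw [indicator_of_mem hx]
        simp only [Pi.one_apply, mul_one]
        apply ENNReal.ofReal_le_ofReal
        apply Real.exp_le_exp.2
        have := Nat.floor_le (hf0 x)
        gcongr
    _ = ∑' k : ℕ, ENNReal.ofReal (Real.exp (-(k : ℝ) ^ 2)) * μ {x | f x ≤ (k : ℝ) + 1} := by
        rw [lintegral_tsum fun k =>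
          ((measurable_one.indicator (hm k)).const_mul _).aemeasurable]
        refine tsum_congr fun k => ?_
        rw [lintegral_const_mul _ (measurable_one.indicator (hm k)), lintegral_indicator_one (hm k)]
    _ ≤ ∑' k : ℕ, A * ENNReal.ofReal (Real.exp (-(k : ℝ) ^ 2) * ((k : ℝ) + 1) ^ s) := by
        refine ENNReal.tsum_le_tsum fun k => ?_
        rw [ENNReal.ofReal_mul (by positivity), mul_left_comm]
        gcongr
        exact h _ (by positivity)
    _ = A * gaussTail s := ENNReal.tsum_mul_left

/-- The Gaussian measure with density `e^{-b ‖ξ‖²}`; it is not normalised. -/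
def gaussM (V : Type*) [NormedAddCommGroup V] [InnerProductSpace ℝ V] [FiniteDimensional ℝ V]
    [MeasurableSpace V] [BorelSpace V] (b : ℝ) : Measure V :=
  volume.withDensity fun ξ => ENNReal.ofReal (Real.exp (-b * ‖ξ‖ ^ 2))

section Gauss

variable {V : Type*} [NormedAddCommGroup V] [InnerProductSpace ℝ V] [FiniteDimensional ℝ V]
    [MeasurableSpace V] [BorelSpace V]

lemma lintegral_gaussM (b : ℝ) (f : V → ℝ≥0∞) (hf : Measurable f) :
    ∫⁻ ξ, f ξ ∂(gaussM V b) = ∫⁻ ξ, ENNReal.ofReal (Real.exp (-b * ‖ξ‖ ^ 2)) * f ξ := by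
  rw [gaussM, lintegral_withDensity_eq_lintegral_mul _ (by fun_prop) hf]
  rfl

lemma integrable_gauss {b : ℝ} (hb : 0 < b) :
    Integrable (fun ξ : V => Real.exp (-b * ‖ξ‖ ^ 2)) := by
  have h := (GaussianFourier.integrable_cexp_neg_mul_sq_norm_add (V := V) (b := (b : ℂ))
    (by simpa using hb) 0 0).norm
  refine h.congr (Eventually.of_forall fun ξ => ?_)
  simp only [Complex.norm_exp]
  congr 1
  rw [zero_mul, add_zero]
  norm_cast

lemma isFiniteMeasure_gaussM {b : ℝ} (hb : 0 < b) : IsFiniteMeasure (gaussM V b) :=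
  isFiniteMeasure_withDensity_ofReal (integrable_gauss hb).2

lemma charFun_gaussM {b : ℝ} (hb : 0 < b) (u : V) :
    charFun (gaussM V b) u =
      (((Real.pi / b) ^ ((Module.finrank ℝ V : ℝ) / 2) * Real.exp (-‖u‖ ^ 2 / (4 * b)) : ℝ) : ℂ) := by
  rw [charFun_apply, gaussM, integral_withDensity_eq_integral_toReal_smul (by fun_prop)
    (Eventually.of_forall fun _ => ENNReal.ofReal_lt_top)]
  have h := GaussianFourier.integral_cexp_neg_mul_sq_norm_add (V := V) (b := (b : ℂ))
    (by simpa using hb) Complex.I u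
  have e : ∀ ξ : V, (ENNReal.ofReal (Real.exp (-b * ‖ξ‖ ^ 2))).toReal •
      Complex.exp (⟪ξ, u⟫ * Complex.I) =
      Complex.exp (-(b : ℂ) * ‖ξ‖ ^ 2 + Complex.I * ⟪u, ξ⟫) := by
    intro ξ
    rw [ENNReal.toReal_ofReal (by positivity), Complex.exp_add, Complex.real_smul, real_inner_comm,
      mul_comm Complex.I]
    push_cast
    rfl
  simp_rw [e]
  rw [h, Complex.I_sq]
  push_cast
  rw [Complex.ofReal_cpow (by positivity)]
  push_cast
  congr 2
  ring

/-- Plancherel-type duality for finite measures `Q`, `μ`, when `Q` has nonnegative real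
characteristic function `g`: `∫ |μ̂|² dQ = ∬ g(y - z) dμ(z) dμ(y)`. -/
lemma lintegral_charFun_sq (Q μ : Measure V) [IsFiniteMeasure Q] [IsFiniteMeasure μ] (g : V → ℝ)
    (hg : ∀ u, charFun Q u = (g u : ℂ)) (hg0 : ∀ u, 0 ≤ g u) :
    ∫⁻ η, ENNReal.ofReal (‖charFun μ η‖ ^ 2) ∂Q =
      ∫⁻ y, ∫⁻ z, ENNReal.ofReal (g (y - z)) ∂μ ∂μ := by
  have hgm : Measurable g := by
    have : g = fun u => (charFun Q u).re := by funext u; rw [hg]; simp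
    rw [this]
    exact Complex.measurable_re.comp measurable_charFun
  have hgb : ∀ u, ‖g u‖ ≤ Q.real univ := by
    intro u
    have := norm_charFun_le (μ := Q) u
    rwa [hg, Complex.norm_real] at this
  have hint1 : Integrable (fun η => ‖charFun μ η‖ ^ 2) Q := by
    refine Integrable.of_bound ?_ ((μ.real univ) ^ 2) (Eventually.of_forall fun η => ?_)
    · exact (measurable_charFun.norm.pow_const 2).aestronglyMeasurable
    · rw [norm_pow, norm_norm]
      have := norm_charFun_le (μ := μ) η
      gcongr
  have hint2 : Integrable (fun w : V × V => g (w.1 - w.2)) (μ.prod μ) := by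
    refine Integrable.of_bound ?_ (Q.real univ) (Eventually.of_forall fun w => hgb _)
    exact (hgm.comp (measurable_fst.sub measurable_snd)).aestronglyMeasurable
  have hrhs : ∫⁻ y, ∫⁻ z, ENNReal.ofReal (g (y - z)) ∂μ ∂μ =
      ENNReal.ofReal (∫ w, g (w.1 - w.2) ∂(μ.prod μ)) := by
    rw [ofReal_integral_eq_lintegral_ofReal hint2 (Eventually.of_forall fun w => hg0 _),
      lintegral_prod]
    exact (ENNReal.measurable_ofReal.comp
      (hgm.comp (measurable_fst.sub measurable_snd))).aemeasurable
  rw [hrhs, ← ofReal_integral_eq_lintegral_ofReal hint1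
    (Eventually.of_forall fun η => by positivity)]
  congr 1
  apply Complex.ofReal_injective
  rw [← integral_complex_ofReal, ← integral_complex_ofReal]
  have e1 : ∀ η, ((‖charFun μ η‖ ^ 2 : ℝ) : ℂ) =
      ∫ w : V × V, Complex.exp (⟪w.1 - w.2, η⟫ * Complex.I) ∂(μ.prod μ) := by
    intro η
    have h1 : ((‖charFun μ η‖ ^ 2 : ℝ) : ℂ) = charFun μ η * charFun μ (-η) := by
      rw [charFun_neg, Complex.mul_conj, Complex.normSq_eq_norm_sq]
    rw [h1, charFun_apply, charFun_apply, ← integral_prod_mul]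
    refine integral_congr_ae (Eventually.of_forall fun w => ?_)
    simp only
    rw [← Complex.exp_add, inner_neg_right, inner_sub_left]
    congr 1
    push_cast
    ring
  simp_rw [e1, ← hg, charFun_apply]
  rw [integral_integral_swap]
  · refine integral_congr_ae (Eventually.of_forall fun w => ?_)
    simp only
    refine integral_congr_ae (Eventually.of_forall fun η => ?_)
    simp only
    rw [real_inner_comm]
  · refine Integrable.of_bound ?_ 1 (Eventually.of_forall fun z => ?_)
    · apply Continuous.aestronglyMeasurable
      simp only [Function.uncurry_def]
      fun_prop
    · simp only [Function.uncurry_def]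
      rw [Complex.norm_exp_ofReal_mul_I]

/-- The energy identity for the Gaussian `e^{-b ‖η‖²}`: the Fourier mass of `μ` weighted by a Gaussian is a
Gaussian energy. -/
lemma lintegral_charFun_sq_gauss (μ : Measure V) [IsFiniteMeasure μ] {b : ℝ} (hb : 0 < b) :
    ∫⁻ η, ENNReal.ofReal (Real.exp (-b * ‖η‖ ^ 2)) * ENNReal.ofReal (‖charFun μ η‖ ^ 2) =
      ENNReal.ofReal ((Real.pi / b) ^ ((Module.finrank ℝ V : ℝ) / 2)) *
        ∫⁻ y, ∫⁻ z, ENNReal.ofReal (Real.exp (-‖y - z‖ ^ 2 / (4 * b))) ∂μ ∂μ := by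
  have := isFiniteMeasure_gaussM (V := V) hb
  rw [← lintegral_gaussM _ _ (by have := measurable_charFun (μ := μ); fun_prop),
    lintegral_charFun_sq (gaussM V b) μ _ (charFun_gaussM hb) (fun u => by positivity)]
  rw [← lintegral_const_mul]
  swap
  · exact Measurable.lintegral_prod_right' (f := fun z : V × V =>
      ENNReal.ofReal (Real.exp (-‖z.1 - z.2‖ ^ 2 / (4 * b)))) (by fun_prop)
  refine lintegral_congr fun y => ?_
  rw [← lintegral_const_mul _ (by fun_prop)]
  refine lintegral_congr fun z => ?_
  rw [ENNReal.ofReal_mul (by positivity)]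

/-- The smoothed `L²` norm of the projection of `μ` in direction `x` is bounded by the mass of
`|μ̂|²` in a unit neighbourhood of the line `ℝ x`. -/
lemma projection_energy_le (μ : Measure V) [IsFiniteMeasure μ] (x : V) {N : ℝ} (hN : 0 < N) :
    ENNReal.ofReal N * ∫⁻ y, ∫⁻ z, ENNReal.ofReal (Real.exp (-(N * ⟪x, y - z⟫) ^ 2) *
        Real.exp (-‖y - z‖ ^ 2)) ∂μ ∂μ ≤
      ∫⁻ η, ENNReal.ofReal (‖charFun μ η‖ ^ 2) *
        ∫⁻ t : ℝ, ENNReal.ofReal (Real.exp (-(1 / 4) * ‖η - t • x‖ ^ 2)) := by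
  -- `β` is chosen so that the characteristic function of `gaussM ℝ β` is `2√π N e^{-N² v²}`
  set β : ℝ := 1 / (4 * N ^ 2) with hβ
  have hβ0 : 0 < β := by positivity
  have i1 := isFiniteMeasure_gaussM (V := V) (show (0 : ℝ) < 1 / 4 by norm_num)
  have i2 := isFiniteMeasure_gaussM (V := ℝ) hβ0
  set φ : ℝ × V → V := fun w => w.1 • x + w.2 with hφ
  have hφm : Measurable φ := by fun_prop
  set Q : Measure V := ((gaussM ℝ β).prod (gaussM V (1 / 4))).map φ with hQ
  have iQ : IsFiniteMeasure Q := by rw [hQ]; infer_instance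
  set c : ℝ := (Real.pi / β) ^ ((Module.finrank ℝ ℝ : ℝ) / 2) *
    (Real.pi / (1 / 4)) ^ ((Module.finrank ℝ V : ℝ) / 2) with hc
  have hchar : ∀ u, charFun Q u = ((c * (Real.exp (-(N * ⟪x, u⟫) ^ 2) *
      Real.exp (-‖u‖ ^ 2)) : ℝ) : ℂ) := by
    intro u
    rw [charFun_apply, hQ, integral_map hφm.aemeasurable
      (Continuous.aestronglyMeasurable (by fun_prop))]
    have e1 : ∀ w : ℝ × V, Complex.exp (⟪φ w, u⟫ * Complex.I) =
        Complex.exp (⟪w.1, ⟪x, u⟫⟫ * Complex.I) * Complex.exp (⟪w.2, u⟫ * Complex.I) := by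
      intro w
      rw [← Complex.exp_add, hφ, inner_add_left, real_inner_smul_left]
      congr 1
      simp only [RCLike.inner_apply, conj_trivial]
      push_cast
      ring
    simp_rw [e1]
    rw [integral_prod_mul (fun t : ℝ => Complex.exp (⟪t, ⟪x, u⟫⟫ * Complex.I))
      (fun ξ : V => Complex.exp (⟪ξ, u⟫ * Complex.I)), ← charFun_apply, ← charFun_apply,
      charFun_gaussM hβ0, charFun_gaussM (by norm_num), ← Complex.ofReal_mul, hc]
    congr 1
    have e2 : -‖(⟪x, u⟫ : ℝ)‖ ^ 2 / (4 * β) = -(N * ⟪x, u⟫) ^ 2 := by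
      rw [Real.norm_eq_abs, sq_abs, hβ]; field_simp
    have e3 : -‖u‖ ^ 2 / (4 * (1 / 4)) = -‖u‖ ^ 2 := by ring
    rw [e2, e3]
    ring
  have hNc : N ≤ c := by
    have h1 : N ≤ (Real.pi / β) ^ ((Module.finrank ℝ ℝ : ℝ) / 2) := by
      have e : Real.pi / β = 4 * Real.pi * N ^ 2 := by rw [hβ]; field_simp
      rw [Module.finrank_self, Nat.cast_one, ← Real.sqrt_eq_rpow, e]
      apply Real.le_sqrt_of_sq_le
      nlinarith [Real.pi_gt_three, sq_nonneg N]
    have h2 : 1 ≤ (Real.pi / (1 / 4)) ^ ((Module.finrank ℝ V : ℝ) / 2) := by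
      apply Real.one_le_rpow _ (by positivity)
      linarith [Real.pi_gt_three]
    calc N = N * 1 := (mul_one N).symm
      _ ≤ c := by rw [hc]; gcongr
  have hcm : Measurable (charFun μ) := measurable_charFun
  calc _ ≤ ∫⁻ y, ∫⁻ z, ENNReal.ofReal (c * (Real.exp (-(N * ⟪x, y - z⟫) ^ 2) *
          Real.exp (-‖y - z‖ ^ 2))) ∂μ ∂μ := by
        rw [← lintegral_const_mul]
        swap
        · exact Measurable.lintegral_prod_right' (f := fun z : V × V =>
            ENNReal.ofReal (Real.exp (-(N * ⟪x, z.1 - z.2⟫) ^ 2) *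
              Real.exp (-‖z.1 - z.2‖ ^ 2))) (by fun_prop)
        refine lintegral_mono fun y => ?_
        rw [← lintegral_const_mul _ (by fun_prop)]
        refine lintegral_mono fun z => ?_
        rw [← ENNReal.ofReal_mul hN.le]
        apply ENNReal.ofReal_le_ofReal
        gcongr
    _ = ∫⁻ η, ENNReal.ofReal (‖charFun μ η‖ ^ 2) ∂Q :=
        (lintegral_charFun_sq Q μ _ hchar (fun u => by positivity)).symm
    _ = ∫⁻ t, ∫⁻ ξ, ENNReal.ofReal (‖charFun μ (t • x + ξ)‖ ^ 2)
          ∂(gaussM V (1 / 4)) ∂(gaussM ℝ β) := by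
        rw [hQ, lintegral_map (by fun_prop) hφm, lintegral_prod _ (by fun_prop)]
    _ ≤ ∫⁻ t : ℝ, ∫⁻ ξ, ENNReal.ofReal (‖charFun μ (t • x + ξ)‖ ^ 2) ∂(gaussM V (1 / 4)) := by
        rw [lintegral_gaussM]
        swap
        · exact Measurable.lintegral_prod_right' (f := fun z : ℝ × V =>
            ENNReal.ofReal (‖charFun μ (z.1 • x + z.2)‖ ^ 2)) (by fun_prop)
        refine lintegral_mono fun t => ?_
        refine mul_le_of_le_one_left zero_le ?_
        rw [← ENNReal.ofReal_one]
        apply ENNReal.ofReal_le_ofReal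
        rw [Real.exp_le_one_iff]
        have : 0 ≤ β * ‖t‖ ^ 2 := by positivity
        linarith
    _ = ∫⁻ t : ℝ, ∫⁻ η, ENNReal.ofReal (Real.exp (-(1 / 4) * ‖η - t • x‖ ^ 2)) *
          ENNReal.ofReal (‖charFun μ η‖ ^ 2) := by
        refine lintegral_congr fun t => ?_
        rw [lintegral_gaussM _ _ (by fun_prop)]
        rw [← lintegral_sub_right_eq_self _ (t • x)]
        refine lintegral_congr fun η => ?_
        rw [add_sub_cancel]
    _ = _ := by
        rw [lintegral_lintegral_swap]
        swap
        · simp only [Function.uncurry_def]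
          exact Measurable.aemeasurable (by fun_prop)
        refine lintegral_congr fun η => ?_
        rw [lintegral_mul_const _ (by fun_prop), mul_comm]

end Gauss

/-! ### The averaged energy estimate -/

section Weight

variable {V : Type*} [NormedAddCommGroup V] [InnerProductSpace ℝ V] [FiniteDimensional ℝ V]
    [MeasurableSpace V] [BorelSpace V]

/-- The distance from `η` to the line `ℝ x`, as the norm of the component of `η` orthogonal to `x`
(it is `‖η‖` when `x = 0`). -/
def lineDist (η x : V) : ℝ := ‖η - (⟪η, x⟫ / ‖x‖ ^ 2) • x‖

/-- The constant `∫ e^{-c² t² / 4} dt`. -/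
def lineConst (c : ℝ) : ℝ≥0∞ := ∫⁻ t : ℝ, ENNReal.ofReal (Real.exp (-(c ^ 2 / 4) * ‖t‖ ^ 2))

lemma lineConst_ne_top {c : ℝ} (hc : 0 < c) : lineConst c ≠ ∞ := by
  have h : Integrable (fun t : ℝ => Real.exp (-(c ^ 2 / 4) * ‖t‖ ^ 2)) :=
    integrable_gauss (V := ℝ) (by positivity)
  have := h.lintegral_lt_top
  exact this.ne

lemma line_integral_le {c : ℝ} (hc : 0 < c) (η x : V) (hx : c ≤ ‖x‖) :
    ∫⁻ t : ℝ, ENNReal.ofReal (Real.exp (-(1 / 4) * ‖η - t • x‖ ^ 2)) ≤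
      lineConst c * ENNReal.ofReal (Real.exp (-(lineDist η x / 2) ^ 2)) := by
  have hx0 : 0 < ‖x‖ := hc.trans_le hx
  set t0 : ℝ := ⟪η, x⟫ / ‖x‖ ^ 2 with ht0
  have hpyth : ∀ t : ℝ, ‖η - t • x‖ ^ 2 = (lineDist η x) ^ 2 + (t - t0) ^ 2 * ‖x‖ ^ 2 := by
    intro t
    have e1 : η - t • x = (η - t0 • x) - (t - t0) • x := by rw [sub_smul]; abel
    have e2 : ⟪η - t0 • x, (t - t0) • x⟫ = 0 := by
      rw [real_inner_smul_right, inner_sub_left, real_inner_smul_left, real_inner_self_eq_norm_sq,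
        ht0, div_mul_cancel₀ _ (by positivity), sub_self, mul_zero]
    rw [e1, norm_sub_sq_real, e2, norm_smul, lineDist, mul_pow, Real.norm_eq_abs, sq_abs]
    ring
  calc _ ≤ ∫⁻ t : ℝ, ENNReal.ofReal (Real.exp (-(c ^ 2 / 4) * ‖t - t0‖ ^ 2)) *
        ENNReal.ofReal (Real.exp (-(lineDist η x / 2) ^ 2)) := by
        refine lintegral_mono fun t => ?_
        rw [← ENNReal.ofReal_mul (by positivity), ← Real.exp_add, hpyth]
        apply ENNReal.ofReal_le_ofReal
        apply Real.exp_le_exp.2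
        rw [Real.norm_eq_abs, sq_abs]
        have : (t - t0) ^ 2 * c ^ 2 ≤ (t - t0) ^ 2 * ‖x‖ ^ 2 := by gcongr
        linarith
    _ = _ := by
        rw [lintegral_mul_const _ (by fun_prop), lineConst,
          lintegral_sub_right_eq_self (fun t : ℝ =>
            ENNReal.ofReal (Real.exp (-(c ^ 2 / 4) * ‖t‖ ^ 2))) t0]

/-- Lines passing close to a far away point `η` and spanned by points of `K` are concentrated
near a single direction, so their base points lie in a small ball. -/
lemma measure_lineDist_le (μ : Measure V) [IsProbabilityMeasure μ] (K : Set V) (hμK : μ Kᶜ = 0)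
    {s : ℝ} (hs : 0 < s) {C : ℝ≥0∞}
    (hμ : ∀ x, ∀ r > 0, μ (Metric.closedBall x r) ≤ C * ENNReal.ofReal (r ^ s))
    {B c : ℝ} (hB0 : 0 < B) (hB : ∀ x ∈ K, ‖x‖ ≤ B) (hc : 0 < c)
    (htr : ∀ x ∈ K, ∀ x' ∈ K, ∀ τ : ℝ, c * ‖x - x'‖ ≤ ‖x - τ • x'‖)
    (η : V) (hη : 0 < ‖η‖) (ρ : ℝ) (hρ : 0 < ρ) :
    μ {x | lineDist η x ≤ ρ} ≤
      (C * ENNReal.ofReal ((4 * B / c) ^ s) + ENNReal.ofReal (2 ^ s)) *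
        ENNReal.ofReal (‖η‖ ^ (-s)) * ENNReal.ofReal (ρ ^ s) := by
  rw [mul_assoc, ← ENNReal.ofReal_mul (by positivity), add_mul, mul_assoc,
    ← ENNReal.ofReal_mul (by positivity), ← ENNReal.ofReal_mul (by positivity)]
  have hpow : ∀ a : ℝ, 0 ≤ a → a ^ s * (‖η‖ ^ (-s) * ρ ^ s) = (a * ρ / ‖η‖) ^ s := by
    intro a ha
    rw [Real.div_rpow (by positivity) hη.le, Real.mul_rpow ha hρ.le, Real.rpow_neg hη.le]
    field_simp
  rw [hpow _ (by positivity), hpow _ (by positivity)]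
  rcases le_or_gt ‖η‖ (2 * ρ) with h | h
  · refine le_add_left (prob_le_one.trans ?_)
    rw [← ENNReal.ofReal_one]
    refine ENNReal.ofReal_le_ofReal (Real.one_le_rpow ?_ hs.le)
    rwa [le_div_iff₀ hη, one_mul]
  · refine le_add_right ?_
    have hKae : μ {x | lineDist η x ≤ ρ} ≤ μ (K ∩ {x | lineDist η x ≤ ρ}) := by
      calc _ ≤ μ (K ∩ {x | lineDist η x ≤ ρ} ∪ Kᶜ) := by
            refine measure_mono fun x hx => ?_
            by_cases hxK : x ∈ K
            · exact Or.inl ⟨hxK, hx⟩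
            · exact Or.inr hxK
        _ ≤ _ := (measure_union_le _ _).trans (by rw [hμK, add_zero])
    refine hKae.trans ?_
    rcases (K ∩ {x | lineDist η x ≤ ρ}).eq_empty_or_nonempty with he | ⟨x0, hx0K, hx0⟩
    · rw [he]; simp
    · refine le_trans (measure_mono ?_) (hμ x0 (4 * B / c * ρ / ‖η‖) (by positivity))
      rintro x ⟨hxK, hx⟩
      rw [mem_closedBall_iff_norm]
      set t := ⟪η, x⟫ / ‖x‖ ^ 2 with ht
      set t' := ⟪η, x0⟫ / ‖x0‖ ^ 2 with ht'
      have hx : ‖η - t • x‖ ≤ ρ := hx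
      have hx0 : ‖η - t' • x0‖ ≤ ρ := hx0
      have htB : ‖η‖ / 2 ≤ |t| * B := by
        have h1 : ‖η‖ ≤ ‖η - t • x‖ + ‖t • x‖ := by
          simpa using norm_add_le (η - t • x) (t • x)
        rw [norm_smul, Real.norm_eq_abs] at h1
        have h2 : |t| * ‖x‖ ≤ |t| * B := by gcongr; exact hB x hxK
        linarith
      have ht0 : 0 < |t| := by
        by_contra hneg
        have : |t| = 0 := le_antisymm (not_lt.1 hneg) (abs_nonneg _)
        rw [this] at htB
        linarith
      have h3 : ‖t • x - t' • x0‖ ≤ 2 * ρ := by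
        have : t • x - t' • x0 = (η - t' • x0) - (η - t • x) := by abel
        rw [this]
        exact (norm_sub_le _ _).trans (by linarith)
      have h4 : t • x - t' • x0 = t • (x - (t' / t) • x0) := by
        rw [smul_sub, smul_smul, mul_div_cancel₀ _ (abs_pos.1 ht0)]
      rw [h4, norm_smul, Real.norm_eq_abs] at h3
      have h5 := htr x hxK x0 hx0K (t' / t)
      have h6 : |t| * (c * ‖x - x0‖) ≤ 2 * ρ := le_trans (by gcongr) h3
      rw [le_div_iff₀ hη, div_mul_eq_mul_div, le_div_iff₀ hc]
      have h7 : ‖η‖ / 2 * (c * ‖x - x0‖) ≤ |t| * B * (c * ‖x - x0‖) := by gcongr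
      have h8 : B * (|t| * (c * ‖x - x0‖)) ≤ B * (2 * ρ) := by gcongr
      nlinarith

lemma lineDist_measurable (η : V) : Measurable fun x : V => lineDist η x := by
  unfold lineDist
  fun_prop

/-- The superposition `∑ⱼ 2^{-js} e^{-4^{-j} ‖η‖²}` of Gaussians, which bounds `min(1, ‖η‖^{-s})` from
above up to the constant `e⁴`. -/
def gaussWeight (s : ℝ) (η : V) : ℝ≥0∞ :=
  ∑' j : ℕ, ENNReal.ofReal (((2 : ℝ) ^ j) ^ (-s)) *
    ENNReal.ofReal (Real.exp (-((4 : ℝ) ^ j)⁻¹ * ‖η‖ ^ 2))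

lemma le_gaussWeight_of_le_one (s : ℝ) (η : V) (hη : ‖η‖ ≤ 1) :
    1 ≤ ENNReal.ofReal (Real.exp 4) * gaussWeight s η := by
  refine le_trans ?_ (mul_le_mul_right (ENNReal.le_tsum 0) _)
  rw [← ENNReal.ofReal_mul (by positivity), ← ENNReal.ofReal_mul (by positivity),
    ← ENNReal.ofReal_one]
  apply ENNReal.ofReal_le_ofReal
  simp only [pow_zero, Real.one_rpow, one_mul, inv_one, neg_mul]
  rw [← Real.exp_add, Real.one_le_exp_iff]
  nlinarith [norm_nonneg η]

lemma le_gaussWeight {s : ℝ} (hs : 0 < s) (η : V) (hη : 1 ≤ ‖η‖) :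
    ENNReal.ofReal (‖η‖ ^ (-s)) ≤ ENNReal.ofReal (Real.exp 4) * gaussWeight s η := by
  obtain ⟨j, hj1, hj2⟩ := exists_nat_pow_near hη (by norm_num : (1 : ℝ) < 2)
  refine le_trans ?_ (mul_le_mul_right (ENNReal.le_tsum j) _)
  rw [← ENNReal.ofReal_mul (by positivity), ← ENNReal.ofReal_mul (by positivity)]
  apply ENNReal.ofReal_le_ofReal
  have h1 : ‖η‖ ^ (-s) ≤ ((2 : ℝ) ^ j) ^ (-s) :=
    Real.rpow_le_rpow_of_nonpos (by positivity) hj1 (by linarith)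
  have h2 : 1 ≤ Real.exp 4 * Real.exp (-((4 : ℝ) ^ j)⁻¹ * ‖η‖ ^ 2) := by
    rw [← Real.exp_add, Real.one_le_exp_iff]
    have h3 : ‖η‖ ^ 2 ≤ (2 ^ (j + 1)) ^ 2 := by gcongr
    have h4 : ((2 : ℝ) ^ (j + 1)) ^ 2 = 4 ^ j * 4 := by
      rw [← pow_mul, mul_comm, pow_mul]; norm_num [pow_succ]
    rw [h4] at h3
    have h5 : ((4 : ℝ) ^ j)⁻¹ * ‖η‖ ^ 2 ≤ ((4 : ℝ) ^ j)⁻¹ * (4 ^ j * 4) := by gcongr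
    rw [inv_mul_cancel_left₀ (by positivity)] at h5
    linarith
  calc ‖η‖ ^ (-s) ≤ ((2 : ℝ) ^ j) ^ (-s) * 1 := by rw [mul_one]; exact h1
    _ ≤ ((2 : ℝ) ^ j) ^ (-s) * (Real.exp 4 * Real.exp (-((4 : ℝ) ^ j)⁻¹ * ‖η‖ ^ 2)) := by gcongr
    _ = _ := by ring

/-- The average over `x` of the weights `∫ e^{-‖η - t x‖²/4} dt` decays like
`min(1, ‖η‖^{-s})`. -/
lemma average_line_le (μ : Measure V) [IsProbabilityMeasure μ] (K : Set V) (hμK : μ Kᶜ = 0)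
    {s : ℝ} (hs : 0 < s) {C : ℝ≥0∞} (hC : C ≠ ∞)
    (hμ : ∀ x, ∀ r > 0, μ (Metric.closedBall x r) ≤ C * ENNReal.ofReal (r ^ s))
    {B c : ℝ} (hB0 : 0 < B) (hB : ∀ x ∈ K, ‖x‖ ≤ B) (hc : 0 < c) (hcK : ∀ x ∈ K, c ≤ ‖x‖)
    (htr : ∀ x ∈ K, ∀ x' ∈ K, ∀ τ : ℝ, c * ‖x - x'‖ ≤ ‖x - τ • x'‖) :
    ∃ A : ℝ≥0∞, A ≠ ∞ ∧ ∀ η : V,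
      ∫⁻ x, (∫⁻ t : ℝ, ENNReal.ofReal (Real.exp (-(1 / 4) * ‖η - t • x‖ ^ 2))) ∂μ ≤
        A * gaussWeight s η := by
  have hKae : ∀ᵐ x ∂μ, x ∈ K := by rw [ae_iff]; exact hμK
  set A₀ : ℝ≥0∞ := C * ENNReal.ofReal ((4 * B / c) ^ s) + ENNReal.ofReal (2 ^ s) with hA₀
  have hA₀t : A₀ ≠ ∞ := by rw [hA₀]; finiteness
  have h1 : ∀ η : V, ∫⁻ x, (∫⁻ t : ℝ, ENNReal.ofReal (Real.exp (-(1 / 4) * ‖η - t • x‖ ^ 2))) ∂μ ≤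
      lineConst c * ∫⁻ x, ENNReal.ofReal (Real.exp (-(lineDist η x / 2) ^ 2)) ∂μ := by
    intro η
    rw [← lintegral_const_mul _ (by have := lineDist_measurable η; fun_prop)]
    refine lintegral_mono_ae ?_
    filter_upwards [hKae] with x hx
    exact line_integral_le hc η x (hcK x hx)
  have hl := lineConst_ne_top hc
  have hg := gaussTail_ne_top s
  refine ⟨lineConst c * (1 + A₀ * ENNReal.ofReal (2 ^ s) * gaussTail s) *
    ENNReal.ofReal (Real.exp 4), by finiteness, fun η => (h1 η).trans ?_⟩
  rw [mul_assoc, mul_assoc]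
  gcongr
  rcases le_or_gt ‖η‖ 1 with h | h
  · calc _ ≤ ∫⁻ _x, 1 ∂μ := by
          refine lintegral_mono fun x => ?_
          rw [← ENNReal.ofReal_one]
          apply ENNReal.ofReal_le_ofReal
          rw [Real.exp_le_one_iff]
          nlinarith [sq_nonneg (lineDist η x / 2)]
      _ = 1 * 1 := by simp
      _ ≤ _ := mul_le_mul' (le_add_right le_rfl) (le_gaussWeight_of_le_one s η h)
  · have hbd := lintegral_exp_neg_sq_le μ (fun x => lineDist η x / 2)
      ((lineDist_measurable η).div_const 2) (fun x => by unfold lineDist; positivity) s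
      (A₀ * ENNReal.ofReal (2 ^ s) * ENNReal.ofReal (‖η‖ ^ (-s))) (by
        intro r hr
        have e : {x | lineDist η x / 2 ≤ r} = {x | lineDist η x ≤ 2 * r} := by
          ext x
          simp only [mem_ofPred_eq]
          constructor <;> intro hh <;> linarith
        rw [e]
        refine (measure_lineDist_le μ K hμK hs hμ hB0 hB hc htr η (by linarith) (2 * r)
          (by linarith)).trans (le_of_eq ?_)
        rw [Real.mul_rpow (by norm_num) hr.le, ENNReal.ofReal_mul (by positivity)]
        ring)
    refine hbd.trans ?_
    calc _ = (A₀ * ENNReal.ofReal (2 ^ s) * gaussTail s) * ENNReal.ofReal (‖η‖ ^ (-s)) := by ring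
      _ ≤ _ := mul_le_mul' (le_add_left le_rfl) (le_gaussWeight hs η h.le)

/-- Finiteness of the energy `∫ |μ̂(η)|² W(η) dη`, with `W ≳ min(1, ‖η‖^{-s})` the Gaussian weight, for
an `s`-Frostman measure with `s > d/2`: the dyadic scale `2^j` contributes `O(2^{j(d - 2s)})`. -/
lemma weighted_energy_ne_top (μ : Measure V) [IsProbabilityMeasure μ]
    {s : ℝ} (hs : 0 < s) (hsd : (Module.finrank ℝ V : ℝ) < 2 * s) {C : ℝ≥0∞} (hC : C ≠ ∞)
    (hμ : ∀ x, ∀ r > 0, μ (Metric.closedBall x r) ≤ C * ENNReal.ofReal (r ^ s)) :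
    ∫⁻ η, ENNReal.ofReal (‖charFun μ η‖ ^ 2) * gaussWeight s η ≠ ∞ := by
  have hcm : Measurable (charFun μ) := measurable_charFun
  set D : ℝ := (Module.finrank ℝ V : ℝ) with hD
  have hj : ∀ j : ℕ, ∫⁻ η, ENNReal.ofReal (Real.exp (-((4 : ℝ) ^ j)⁻¹ * ‖η‖ ^ 2)) *
      ENNReal.ofReal (‖charFun μ η‖ ^ 2) ≤
      ENNReal.ofReal (Real.pi ^ (D / 2) * ((2 : ℝ) ^ j) ^ D) *
        (C * ENNReal.ofReal (2 ^ s * ((2 : ℝ) ^ j) ^ (-s)) * gaussTail s) := by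
    intro j
    rw [lintegral_charFun_sq_gauss μ (by positivity)]
    have e1 : (Real.pi / ((4 : ℝ) ^ j)⁻¹) ^ (D / 2) = Real.pi ^ (D / 2) * ((2 : ℝ) ^ j) ^ D := by
      rw [div_inv_eq_mul, Real.mul_rpow (by positivity) (by positivity)]
      congr 1
      have : (4 : ℝ) ^ j = ((2 : ℝ) ^ j) ^ (2 : ℝ) := by
        rw [Real.rpow_two, ← pow_mul, mul_comm, pow_mul]; norm_num
      rw [this, ← Real.rpow_mul (by positivity)]
      congr 1; ring
    rw [← hD, e1]
    gcongr
    calc _ ≤ ∫⁻ _y, C * ENNReal.ofReal (2 ^ s * ((2 : ℝ) ^ j) ^ (-s)) * gaussTail s ∂μ := by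
          refine lintegral_mono fun y => ?_
          have e2 : ∀ z, -‖y - z‖ ^ 2 / (4 * ((4 : ℝ) ^ j)⁻¹) = -(2 ^ j / 2 * ‖y - z‖) ^ 2 := by
            intro z
            have : (4 : ℝ) ^ j = ((2 : ℝ) ^ j) ^ 2 := by
              rw [← pow_mul, mul_comm, pow_mul]; norm_num
            rw [this]; field_simp; norm_num
          simp_rw [e2]
          refine lintegral_exp_neg_sq_le μ _ (by fun_prop) (fun z => by positivity) s _ ?_
          intro r hr
          have e3 : {z | 2 ^ j / 2 * ‖y - z‖ ≤ r} = Metric.closedBall y (2 * ((2 : ℝ) ^ j)⁻¹ * r) := by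
            ext z
            rw [mem_closedBall_iff_norm', mem_ofPred_eq]
            have h2 : (0 : ℝ) < 2 ^ j / 2 := by positivity
            have h3 : 2 * ((2 : ℝ) ^ j)⁻¹ * r = r / (2 ^ j / 2) := by field_simp
            rw [h3, le_div_iff₀ h2, mul_comm]
          rw [e3]
          refine (hμ y _ (by positivity)).trans (le_of_eq ?_)
          rw [mul_assoc C, ← ENNReal.ofReal_mul (by positivity),
            Real.mul_rpow (by positivity) hr.le, Real.mul_rpow (by positivity) (by positivity),
            Real.inv_rpow (by positivity), Real.rpow_neg (by positivity)]
      _ = _ := by simp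
  have hgw : ∀ η : V, ENNReal.ofReal (‖charFun μ η‖ ^ 2) * gaussWeight s η =
      ∑' j : ℕ, ENNReal.ofReal (((2 : ℝ) ^ j) ^ (-s)) *
        (ENNReal.ofReal (Real.exp (-((4 : ℝ) ^ j)⁻¹ * ‖η‖ ^ 2)) *
          ENNReal.ofReal (‖charFun μ η‖ ^ 2)) := by
    intro η
    rw [gaussWeight, ← ENNReal.tsum_mul_left]
    exact tsum_congr fun j => by ring
  simp_rw [hgw]
  rw [lintegral_tsum fun j => Measurable.aemeasurable (by fun_prop)]
  have hgeo : ∀ j : ℕ, ((2 : ℝ) ^ j) ^ (-s) * (((2 : ℝ) ^ j) ^ D * ((2 : ℝ) ^ j) ^ (-s)) =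
      ((2 : ℝ) ^ (D - 2 * s)) ^ j := by
    intro j
    rw [← Real.rpow_add (by positivity), ← Real.rpow_add (by positivity), ← Real.rpow_natCast,
      ← Real.rpow_mul (by norm_num), ← Real.rpow_natCast, ← Real.rpow_mul (by norm_num)]
    congr 1; ring
  set G : ℝ≥0∞ := ENNReal.ofReal (Real.pi ^ (D / 2)) * C * ENNReal.ofReal (2 ^ s) * gaussTail s
    with hG
  have hGt : G ≠ ∞ := by
    have hg := gaussTail_ne_top s
    rw [hG]; finiteness
  have hbound : ∑' j : ℕ, ∫⁻ η, ENNReal.ofReal (((2 : ℝ) ^ j) ^ (-s)) *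
        (ENNReal.ofReal (Real.exp (-((4 : ℝ) ^ j)⁻¹ * ‖η‖ ^ 2)) *
          ENNReal.ofReal (‖charFun μ η‖ ^ 2)) ≤
      ∑' j : ℕ, G * ENNReal.ofReal (((2 : ℝ) ^ (D - 2 * s)) ^ j) := by
    refine ENNReal.tsum_le_tsum fun j => ?_
    rw [lintegral_const_mul _ (by fun_prop)]
    refine (mul_le_mul_right (hj j) _).trans (le_of_eq ?_)
    rw [← hgeo, hG]
    simp only [ENNReal.ofReal_mul (Real.rpow_nonneg (pow_nonneg zero_le_two j) _),
      ENNReal.ofReal_mul (Real.rpow_nonneg Real.pi_nonneg _),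
      ENNReal.ofReal_mul (Real.rpow_nonneg zero_le_two _)]
    ring
  refine (hbound.trans_lt ?_).ne
  rw [ENNReal.tsum_mul_left]
  refine ENNReal.mul_lt_top hGt.lt_top ?_
  have hsum : Summable fun j : ℕ => ((2 : ℝ) ^ (D - 2 * s)) ^ j :=
    summable_geometric_of_lt_one (by positivity)
      (Real.rpow_lt_one_of_one_lt_of_neg (by norm_num) (by linarith))
  exact hsum.tsum_ofReal_ne_top.lt_top

/-- The smoothed `L²` norm of the projection of `μ` in the direction `x`, bounded on the Fourier
side. On the support of `μ` the factor `e^{-‖y - z‖²}` is at least `e^{-4B²}`, which allows the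
Gaussian cutoff in `projection_energy_le` to be dropped. -/
lemma projection_energy_le_of_bounded (μ : Measure V) [IsProbabilityMeasure μ]
    {B : ℝ} (hB : ∀ᵐ x ∂μ, ‖x‖ ≤ B) {N : ℕ} (hN : 0 < N) (x : V) :
    (N : ℝ≥0∞) * ∫⁻ y, ∫⁻ z, ENNReal.ofReal (Real.exp (-((N : ℝ) * ⟪x, y - z⟫) ^ 2)) ∂μ ∂μ ≤
      ENNReal.ofReal (Real.exp ((2 * B) ^ 2)) * ∫⁻ η, ENNReal.ofReal (‖charFun μ η‖ ^ 2) *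
        ∫⁻ t : ℝ, ENNReal.ofReal (Real.exp (-(1 / 4) * ‖η - t • x‖ ^ 2)) := by
  have hN' : (0 : ℝ) < N := by exact_mod_cast hN
  refine le_trans ?_ (mul_le_mul_right (projection_energy_le μ x hN') _)
  rw [ENNReal.ofReal_natCast, mul_left_comm]
  gcongr
  rw [← lintegral_const_mul]
  swap
  · exact Measurable.lintegral_prod_right' (f := fun z : V × V =>
      ENNReal.ofReal (Real.exp (-((N : ℝ) * ⟪x, z.1 - z.2⟫) ^ 2) *
        Real.exp (-‖z.1 - z.2‖ ^ 2))) (by fun_prop)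
  refine lintegral_mono_ae ?_
  filter_upwards [hB] with y hy
  rw [← lintegral_const_mul _ (by fun_prop)]
  refine lintegral_mono_ae ?_
  filter_upwards [hB] with z hz
  rw [← ENNReal.ofReal_mul (by positivity)]
  apply ENNReal.ofReal_le_ofReal
  have h1 : ‖y - z‖ ≤ 2 * B := (norm_sub_le _ _).trans (by linarith)
  have h2 : 1 ≤ Real.exp ((2 * B) ^ 2) * Real.exp (-‖y - z‖ ^ 2) := by
    rw [← Real.exp_add, Real.one_le_exp_iff]
    have : ‖y - z‖ ^ 2 ≤ (2 * B) ^ 2 := by gcongr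
    linarith
  calc Real.exp (-((N : ℝ) * ⟪x, y - z⟫) ^ 2)
      ≤ Real.exp (-((N : ℝ) * ⟪x, y - z⟫) ^ 2) *
        (Real.exp ((2 * B) ^ 2) * Real.exp (-‖y - z‖ ^ 2)) :=
        le_mul_of_one_le_right (by positivity) h2
    _ = _ := by ring

/-- Averaged over `x ∈ K`, the smoothed `L²` norms of the projections of `μ` are bounded uniformly
in the scale `1/N`. -/
lemma average_projection_energy (μ : Measure V) [IsProbabilityMeasure μ] (K : Set V)
    (hμK : μ Kᶜ = 0)
    {s : ℝ} (hs : 0 < s) (hsd : (Module.finrank ℝ V : ℝ) < 2 * s) {C : ℝ≥0∞} (hC : C ≠ ∞)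
    (hμ : ∀ x, ∀ r > 0, μ (Metric.closedBall x r) ≤ C * ENNReal.ofReal (r ^ s))
    {B c : ℝ} (hB0 : 0 < B) (hB : ∀ x ∈ K, ‖x‖ ≤ B) (hc : 0 < c) (hcK : ∀ x ∈ K, c ≤ ‖x‖)
    (htr : ∀ x ∈ K, ∀ x' ∈ K, ∀ τ : ℝ, c * ‖x - x'‖ ≤ ‖x - τ • x'‖) :
    ∃ A : ℝ≥0∞, A ≠ ∞ ∧ ∀ N : ℕ,
      ∫⁻ x, (N : ℝ≥0∞) * ∫⁻ y, ∫⁻ z, ENNReal.ofReal (Real.exp (-((N : ℝ) * ⟪x, y - z⟫) ^ 2))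
        ∂μ ∂μ ∂μ ≤ A := by
  obtain ⟨A, hA, hAη⟩ := average_line_le μ K hμK hs hC hμ hB0 hB hc hcK htr
  have hcm : Measurable (charFun μ) := measurable_charFun
  have hKae : ∀ᵐ x ∂μ, x ∈ K := by rw [ae_iff]; exact hμK
  have hE := weighted_energy_ne_top μ hs hsd hC hμ
  refine ⟨ENNReal.ofReal (Real.exp ((2 * B) ^ 2)) *
    (A * ∫⁻ η, ENNReal.ofReal (‖charFun μ η‖ ^ 2) * gaussWeight s η), by finiteness, fun N => ?_⟩
  rcases Nat.eq_zero_or_pos N with rfl | hN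
  · simp
  have hstep := projection_energy_le_of_bounded μ (hKae.mono fun x hx => hB x hx) hN
  have hmL : Measurable fun z : V × V =>
      ∫⁻ t : ℝ, ENNReal.ofReal (Real.exp (-(1 / 4) * ‖z.2 - t • z.1‖ ^ 2)) :=
    Measurable.lintegral_prod_right' (f := fun w : (V × V) × ℝ =>
      ENNReal.ofReal (Real.exp (-(1 / 4) * ‖w.1.2 - w.2 • w.1.1‖ ^ 2))) (by fun_prop)
  have hmF : Measurable fun z : V × V => ENNReal.ofReal (‖charFun μ z.2‖ ^ 2) *
      ∫⁻ t : ℝ, ENNReal.ofReal (Real.exp (-(1 / 4) * ‖z.2 - t • z.1‖ ^ 2)) := by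
    refine Measurable.mul ?_ hmL
    fun_prop
  refine (lintegral_mono hstep).trans ?_
  rw [lintegral_const_mul _ hmF.lintegral_prod_right']
  gcongr
  rw [lintegral_lintegral_swap (f := fun x η => ENNReal.ofReal (‖charFun μ η‖ ^ 2) *
      ∫⁻ t : ℝ, ENNReal.ofReal (Real.exp (-(1 / 4) * ‖η - t • x‖ ^ 2))) hmF.aemeasurable]
  have hgm : Measurable (gaussWeight (V := V) s) := by
    unfold gaussWeight
    refine Measurable.tsum fun j => ?_
    fun_prop
  have hmE : Measurable fun η : V => ENNReal.ofReal (‖charFun μ η‖ ^ 2) * gaussWeight s η :=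
    Measurable.mul (by fun_prop) hgm
  rw [← lintegral_const_mul _ hmE]
  refine lintegral_mono fun η => ?_
  have hm1 : Measurable fun x : V =>
      ∫⁻ t : ℝ, ENNReal.ofReal (Real.exp (-(1 / 4) * ‖η - t • x‖ ^ 2)) :=
    Measurable.lintegral_prod_right' (f := fun w : V × ℝ =>
      ENNReal.ofReal (Real.exp (-(1 / 4) * ‖η - w.2 • w.1‖ ^ 2))) (by fun_prop)
  rw [lintegral_const_mul _ hm1, mul_left_comm A]
  exact mul_le_mul_right (hAη η) _

end Weight

/-! ### Pinned dot products -/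

/-- If the smoothed `L²` norms of the projections `y ↦ ⟪x, y⟫` of `μ` are bounded on average over `x`,
uniformly in the scale, then by Fatou some `x ∈ K` has them bounded along a sequence of scales. -/
lemma exists_pin {V : Type*} [NormedAddCommGroup V] [InnerProductSpace ℝ V] [FiniteDimensional ℝ V]
    [MeasurableSpace V] [BorelSpace V] (μ : Measure V) [IsProbabilityMeasure μ] (K : Set V)
    (hK : IsCompact K) (hμK : μ Kᶜ = 0)
    {A : ℝ≥0∞} (hA : A ≠ ∞) (hbound : ∀ N : ℕ,
      ∫⁻ x, (N : ℝ≥0∞) * ∫⁻ y, ∫⁻ z, ENNReal.ofReal (Real.exp (-((N : ℝ) * ⟪x, y - z⟫) ^ 2))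
        ∂μ ∂μ ∂μ ≤ A) :
    ∃ x ∈ K, volume ((fun y => ⟪x, y⟫) '' K) ≠ 0 := by
  have hKae : ∀ᵐ x ∂μ, x ∈ K := by rw [ae_iff]; exact hμK
  set Φ : ℕ → V → ℝ≥0∞ := fun N x => (N : ℝ≥0∞) *
    ∫⁻ y, ∫⁻ z, ENNReal.ofReal (Real.exp (-((N : ℝ) * ⟪x, y - z⟫) ^ 2)) ∂μ ∂μ with hΦ
  have hΦm : ∀ N, Measurable (Φ N) := by
    intro N
    refine Measurable.const_mul ?_ _
    refine Measurable.lintegral_prod_right' (f := fun w : V × V =>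
      ∫⁻ z, ENNReal.ofReal (Real.exp (-((N : ℝ) * ⟪w.1, w.2 - z⟫) ^ 2)) ∂μ) ?_
    exact Measurable.lintegral_prod_right' (f := fun w : (V × V) × V =>
      ENNReal.ofReal (Real.exp (-((N : ℝ) * ⟪w.1.1, w.1.2 - w.2⟫) ^ 2))) (by fun_prop)
  have hfatou : ∫⁻ x, liminf (fun N => Φ N x) atTop ∂μ ≠ ∞ := by
    refine ((lintegral_liminf_le hΦm).trans_lt ?_).ne
    refine lt_of_le_of_lt ?_ hA.lt_top
    refine (liminf_le_liminf (Eventually.of_forall hbound)).trans ?_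
    simp
  have hfin := ae_lt_top (Measurable.liminf hΦm) hfatou
  obtain ⟨x, hxK, hx⟩ := (hKae.and hfin).exists
  obtain ⟨C, hC1, hC2⟩ := exists_between hx
  have hfreq := frequently_lt_of_liminf_lt (by isBoundedDefault) hC1
  refine ⟨x, hxK, ?_⟩
  have hpm : Measurable fun y : V => ⟪x, y⟫ := by fun_prop
  have hpc : Continuous fun y : V => ⟪x, y⟫ := by fun_prop
  have hFc : IsCompact ((fun y => ⟪x, y⟫) '' K) := hK.image hpc
  have hprob : IsProbabilityMeasure (μ.map fun y => ⟪x, y⟫) :=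
    Measure.isProbabilityMeasure_map hpm.aemeasurable
  refine volume_ne_zero_of_energy (μ.map fun y => ⟪x, y⟫) (by simp) _ hFc ?_ C hC2.ne ?_
  · rw [Measure.map_apply hpm hFc.measurableSet.compl]
    refine measure_mono_null (fun y hy hyK => hy ⟨y, hyK, rfl⟩) hμK
  · refine hfreq.mono fun N hN => le_trans (le_of_eq ?_) hN.le
    rw [hΦ]
    simp only
    congr 1
    rw [lintegral_map _ hpm]
    · refine lintegral_congr fun y => ?_
      rw [lintegral_map (by fun_prop) hpm]
      simp_rw [inner_sub_right]
    · exact Measurable.lintegral_prod_right' (f := fun w : ℝ × ℝ =>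
        ENNReal.ofReal (Real.exp (-((N : ℝ) * (w.1 - w.2)) ^ 2))) (by fun_prop)

end

/-- If `E` is a compact subset of a translated unit sphere `a + S^{d-1} ⊆ ℝ^d` with
Hausdorff dimension greater than `d/2`, then there is `x ∈ E` whose pinned dot product
set has positive Lebesgue measure; in particular `Π(E)` has positive Lebesgue measure. -/
theorem dot_product_translated_sphere
    (d : ℕ) (hd : 2 ≤ d) (a : EuclideanSpace ℝ (Fin d))
    (E : Set (EuclideanSpace ℝ (Fin d)))
    (hEsub : E ⊆ (a + ·) '' Metric.sphere (0 : EuclideanSpace ℝ (Fin d)) 1)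
    (hEcomp : IsCompact E)
    (hdim : (d : ℝ≥0∞) / 2 < dimH E) :
    (∃ x ∈ E, 0 < volume (pinnedDotSet x E)) ∧ 0 < volume (dotSet E) := by
  have hE : ∀ x ∈ E, ‖x - a‖ = 1 := by
    intro x hx
    obtain ⟨u, hu, rfl⟩ := hEsub hx
    simpa using hu
  obtain ⟨s, hds, hsE⟩ := ENNReal.lt_iff_exists_nnreal_btwn.1 hdim
  have hsd : (d : ℝ) < 2 * s := by
    have h1 : (d : ℝ≥0∞) < s * 2 :=
      (ENNReal.div_lt_iff (Or.inl two_ne_zero) (Or.inl (by simp))).1 hds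
    have h2 : (d : NNReal) < s * 2 := by exact_mod_cast h1
    have h3 : (d : ℝ) < s * 2 := by exact_mod_cast h2
    linarith
  have hs : (0 : ℝ) < s := by
    have : (2 : ℝ) ≤ d := by exact_mod_cast hd
    linarith
  obtain ⟨K, hKE, hK, hsK, c, hc, hcK, htr⟩ := exists_good_piece a E hE hEcomp hsE
  obtain ⟨μ, hμ, hμK, C, hC, hball⟩ := frostman K hK hs
    (by rw [hausdorffMeasure_of_lt_dimH hsK]; exact ENNReal.top_ne_zero)
  obtain ⟨B, hB0, hB⟩ := hK.isBounded.exists_pos_norm_le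
  obtain ⟨A, hA, hbound⟩ := average_projection_energy μ K hμK hs
    (by rwa [finrank_euclideanSpace_fin]) hC hball hB0 hB hc hcK htr
  obtain ⟨x, hxK, hx⟩ := exists_pin μ K hK hμK hA hbound
  have hpin : 0 < volume (pinnedDotSet x E) := by
    refine (pos_iff_ne_zero.2 hx).trans_le (measure_mono ?_)
    rintro _ ⟨y, hy, rfl⟩
    exact ⟨y, hKE hy, rfl⟩
  refine ⟨⟨x, hKE hxK, hpin⟩, hpin.trans_le (measure_mono ?_)⟩
  rintro t ⟨y, hy, rfl⟩
  exact ⟨x, hKE hxK, y, hy, rfl⟩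
end

section
/- Let d ≥ 2. For every ε > 0 there exists a compact subset F of the standard paraboloid P_d = {(x̄, |x̄|²) : x̄ ∈ ℝ^{d−1}} ⊆ ℝ^d such that the Hausdorff dimension of F is strictly greater than (d−1)/4 − ε and the dot product set Π(F) has one-dimensional Lebesgue measure zero. -/
/-!
Let `n = d - 1`. If every coordinate of `x, y ∈ [0,1]ⁿ` is within `δ` of `Q⁻¹ ℤ`, then
`(x, |x|²) · (y, |y|²) = x · y + |x|² |y|²` is within `O(δ)` of `Q⁻⁴ ℤ` (`dot_approx`). Hence the dot
product set is null as soon as this holds for a sequence of scales with `Q⁴ δ → 0` (`null_of_grid`).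

Numbers with this approximation property are obtained from digit expansions: `sparseSum e a` has free
digits `a m < b` at the positions `e m` of its base `b + 1` expansion and zeros elsewhere. The
positions (`exists_positions`) satisfy `e m ≤ (4 + 20 / b) m + 24` but `e (m + 1) ≥ 4 e m + k` for
suitable `m` depending on `k`; truncation there gives `Q = (b + 1) ^ e m` and `Q⁴ δ ≲ (b + 1) ^ (-k)`.

The set `F` is the set of lifts of points all of whose coordinates are such numbers; it is the
continuous image of the compact space `Fin n → ℕ → Fin b`. For its dimension, digits are read
instead as an ordinary base `b` expansion: `sparseSum e a ↦ Real.ofDigits a` is Hölder with an exponent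
`r` close to `1/4` (`holder_real`), and coordinatewise it maps onto a set containing the open unit cube
of `ℝⁿ`. Hölder maps of exponent `r` increase dimension by a factor of at most `1 / r`, so
`dim F ≥ n r` (`dimH_range_le_of_holder`), and `b` is taken large (`exists_param`).
-/

open MeasureTheory
open scoped RealInnerProductSpace ENNReal

/-- The standard paraboloid `P_d = {(x̄, |x̄|²) : x̄ ∈ ℝ^{d-1}}` in `ℝ^d`. -/
def stdParaboloid (d : ℕ) : Set (EuclideanSpace ℝ (Fin d)) :=
  {p | ∃ x : EuclideanSpace ℝ (Fin (d - 1)),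
    p = fun i : Fin d => if h : (i : ℕ) < d - 1 then x ⟨i, h⟩ else ‖x‖ ^ 2}

open Filter Topology

/-! ### Digit positions with long sparse gaps -/

/-- Positions `e` at which the free digits are placed. They grow like `(4 + 20 / R) * m`, which
governs the dimension, yet infinitely often the next position exceeds four times the current one by
an arbitrary amount, which makes the dot product set null. The jumps occur at the indices
`m + 1 = R ^ k`. -/
lemma exists_positions (R : ℕ) (hR : 20 ≤ R) : ∃ e : ℕ → ℕ, StrictMono e ∧ (∀ m, 1 ≤ e m) ∧
    (∀ m, (e m : ℝ) ≤ (4 + 20 / R) * m + 24) ∧ ∀ k, ∃ m, 4 * e m + k ≤ e (m + 1) := by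
  refine ⟨fun m => m + 1 + 3 * R ^ Nat.log R m + 20 * R ^ (Nat.log R m - 1), ?_, ?_, ?_, ?_⟩
  · refine strictMono_nat_of_lt_succ fun m => ?_
    have h1 : Nat.log R m ≤ Nat.log R (m + 1) := Nat.log_mono_right (Nat.le_succ m)
    have h2 : R ^ Nat.log R m ≤ R ^ Nat.log R (m + 1) := Nat.pow_le_pow_right (by omega) h1
    have h3 : R ^ (Nat.log R m - 1) ≤ R ^ (Nat.log R (m + 1) - 1) :=
      Nat.pow_le_pow_right (by omega) (by omega)
    show m + 1 + _ + _ < m + 1 + 1 + _ + _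
    omega
  · intro m; show 1 ≤ m + 1 + _ + _; omega
  · intro m
    have hR0 : (0 : ℝ) < R := by exact_mod_cast (by omega : 0 < R)
    push_cast
    have e0 : (4 + 20 / (R : ℝ)) * m = 4 * m + 20 * (m / R) := by ring
    rw [e0]
    rcases Nat.eq_zero_or_pos (Nat.log R m) with h | h
    · have : 0 ≤ (m : ℝ) / R := by positivity
      have : 0 ≤ (m : ℝ) := by positivity
      rw [h]; norm_num; linarith
    · have hm : m ≠ 0 := by rintro rfl; simp at h
      have h1 : (R : ℝ) ^ Nat.log R m ≤ m := by exact_mod_cast Nat.pow_log_le_self R hm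
      have h2 : (R : ℝ) ^ (Nat.log R m - 1) ≤ m / R := by
        rw [le_div_iff₀ hR0, ← pow_succ, Nat.sub_add_cancel h]; exact h1
      linarith
  · intro k
    refine ⟨R ^ (k + 2) - 1, ?_⟩
    have hpos : 1 ≤ R ^ (k + 1) := Nat.one_le_pow _ _ (by omega)
    have hlt : R ^ (k + 1) < R ^ (k + 2) := Nat.pow_lt_pow_right (by omega) (by omega)
    have h1 : Nat.log R (R ^ (k + 2) - 1) = k + 1 := by
      rw [Nat.log_eq_iff (Or.inl (by omega))]
      exact ⟨by omega, by show R ^ (k + 2) - 1 < R ^ (k + 2); omega⟩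
    have h2 : R ^ (k + 2) - 1 + 1 = R ^ (k + 2) := by omega
    simp only [h2, h1, Nat.log_pow (show 1 < R by omega)]
    have h3 : k < R ^ (k + 1) := lt_trans (Nat.lt_succ_self k) (Nat.lt_pow_self (by omega))
    have h4 : 20 * R ^ k ≤ R ^ (k + 1) := by
      rw [pow_succ, mul_comm]; exact Nat.mul_le_mul_left _ hR
    have h5 : k + 1 - 1 = k := by omega
    have h6 : k + 2 - 1 = k + 1 := by omega
    rw [h5, h6]
    omega

/-! ### Reals with prescribed digits at sparse positions -/

/-- The real number whose base `b + 1` expansion has digit `a m` at position `e m` and zeros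
elsewhere. Digits range over `Fin b`, so the largest digit `b` of base `b + 1` never occurs and
carries cannot bring distinct expansions close together. -/
noncomputable def sparseSum {b : ℕ} (e : ℕ → ℕ) (a : ℕ → Fin b) : ℝ :=
  ∑' m, (a m : ℝ) * (((b : ℝ) + 1) ^ e m)⁻¹

section sparse
variable {b : ℕ} {e : ℕ → ℕ}

lemma digit_le (x : Fin b) : (x : ℝ) ≤ b - 1 := by
  have : (x : ℕ) + 1 ≤ b := x.2
  have : ((x : ℕ) : ℝ) + 1 ≤ b := by exact_mod_cast this
  linarith

/-- The value of the expansion with the maximal digit `b - 1` at every position after `p`; the factor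
`(b - 1) / b < 1` comes from never using the digit `b`. -/
lemma hasSum_bound (hb : 0 < b) (p : ℕ) :
    HasSum (fun j : ℕ => ((b : ℝ) - 1) * (((b : ℝ) + 1) ^ (p + 1 + j))⁻¹)
      ((b - 1) / b * (((b : ℝ) + 1) ^ p)⁻¹) := by
  have hb' : (0 : ℝ) < b := by exact_mod_cast hb
  have h := (hasSum_geometric_of_lt_one (r := ((b : ℝ) + 1)⁻¹) (by positivity)
    (inv_lt_one_of_one_lt₀ (by linarith))).mul_left (((b : ℝ) - 1) * (((b : ℝ) + 1) ^ (p + 1))⁻¹)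
  have hsum : ((b : ℝ) - 1) / b * (((b : ℝ) + 1) ^ p)⁻¹ =
      ((b : ℝ) - 1) * (((b : ℝ) + 1) ^ (p + 1))⁻¹ * (1 - ((b : ℝ) + 1)⁻¹)⁻¹ := by
    have : (1 - ((b : ℝ) + 1)⁻¹) = b / (b + 1) := by field_simp; ring
    rw [this, pow_succ]; field_simp
  rw [hsum]
  have hfun : (fun j : ℕ => ((b : ℝ) - 1) * (((b : ℝ) + 1) ^ (p + 1 + j))⁻¹) = fun j : ℕ =>
      ((b : ℝ) - 1) * (((b : ℝ) + 1) ^ (p + 1))⁻¹ * (((b : ℝ) + 1)⁻¹) ^ j := by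
    ext j
    rw [pow_add _ (p + 1) j, mul_inv, inv_pow]; ring
  rw [hfun]
  exact h

lemma term_le {p : ℕ} (he : ∀ j, p + 1 + j ≤ e j) (a : ℕ → Fin b) (j : ℕ) :
    (a j : ℝ) * (((b : ℝ) + 1) ^ e j)⁻¹ ≤ ((b : ℝ) - 1) * (((b : ℝ) + 1) ^ (p + 1 + j))⁻¹ := by
  have h1 := digit_le (a j)
  have h0 : (0 : ℝ) ≤ (a j : ℝ) := by positivity
  have hb : (0 : ℝ) ≤ b := by positivity
  gcongr
  · linarith
  · linarith
  · exact he j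

lemma summable_term {p : ℕ} (he : ∀ j, p + 1 + j ≤ e j) (a : ℕ → Fin b) :
    Summable fun j => (a j : ℝ) * (((b : ℝ) + 1) ^ e j)⁻¹ :=
  Summable.of_nonneg_of_le (fun _ => by positivity) (term_le he a)
    (hasSum_bound (a 0).pos p).summable

lemma sparseSum_nonneg (a : ℕ → Fin b) : 0 ≤ sparseSum e a :=
  tsum_nonneg fun _ => by positivity

lemma sparseSum_le {p : ℕ} (he : ∀ j, p + 1 + j ≤ e j) (a : ℕ → Fin b) :
    sparseSum e a ≤ (b - 1) / b * (((b : ℝ) + 1) ^ p)⁻¹ := by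
  have h := hasSum_bound (a 0).pos p
  rw [← h.tsum_eq]
  exact (summable_term he a).tsum_le_tsum (term_le he a) h.summable

lemma add_le_of_strictMono (he : StrictMono e) (m j : ℕ) : e m + j ≤ e (j + m) := by
  induction j with
  | zero => simp
  | succ j ih =>
    have := he (show j + m < j + 1 + m by omega)
    omega

lemma succ_le_of_strictMono (he : StrictMono e) (he1 : ∀ m, 1 ≤ e m) (j : ℕ) : 0 + 1 + j ≤ e j := by
  have := add_le_of_strictMono he 0 j
  have := he1 0
  simp only [add_zero] at *
  omega

lemma continuous_sparseSum (he : StrictMono e) (he1 : ∀ m, 1 ≤ e m) :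
    Continuous (sparseSum e : (ℕ → Fin b) → ℝ) := by
  rcases Nat.eq_zero_or_pos b with rfl | hb
  · exact continuous_of_const fun a => (a 0).elim0
  refine continuous_tsum (u := fun j => ((b : ℝ) - 1) * (((b : ℝ) + 1) ^ (0 + 1 + j))⁻¹)
    (fun m => ?_) (hasSum_bound hb 0).summable ?_
  · have : Continuous fun x : Fin b => (x : ℝ) := continuous_of_discreteTopology
    fun_prop
  · intro m a
    rw [Real.norm_of_nonneg (by positivity)]
    exact term_le (succ_le_of_strictMono he he1) a m

lemma sparseSum_split (he : StrictMono e) (he1 : ∀ m, 1 ≤ e m) (a : ℕ → Fin b) (m : ℕ) :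
    sparseSum e a = ∑ j ∈ Finset.range m, (a j : ℝ) * (((b : ℝ) + 1) ^ e j)⁻¹ +
      sparseSum (fun j => e (j + m)) (fun j => a (j + m)) :=
  ((summable_term (succ_le_of_strictMono he he1) a).sum_add_tsum_nat_add m).symm

lemma sparseSum_le_one (he : StrictMono e) (he1 : ∀ m, 1 ≤ e m) (a : ℕ → Fin b) :
    sparseSum e a ≤ 1 := by
  have hb : (0 : ℝ) < b := by exact_mod_cast (a 0).pos
  refine (sparseSum_le (succ_le_of_strictMono he he1) a).trans ?_
  rw [pow_zero, inv_one, mul_one, div_le_one hb]; linarith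

/-- Truncating after index `m` approximates `sparseSum e a` from below by a multiple of
`(b + 1) ^ (-e m)`, with an error of the order of the next position `(b + 1) ^ (-e (m + 1))`. -/
lemma sparseSum_approx (he : StrictMono e) (he1 : ∀ m, 1 ≤ e m) (a : ℕ → Fin b) (m : ℕ) :
    ∃ z : ℕ, z / ((b : ℝ) + 1) ^ e m ≤ sparseSum e a ∧
      sparseSum e a ≤ z / ((b : ℝ) + 1) ^ e m + (b + 1) / ((b : ℝ) + 1) ^ e (m + 1) := by
  have hb : (0 : ℝ) < b := by exact_mod_cast (a 0).pos
  refine ⟨∑ j ∈ Finset.range (m + 1), (a j : ℕ) * (b + 1) ^ (e m - e j), ?_⟩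
  have key : ((∑ j ∈ Finset.range (m + 1), (a j : ℕ) * (b + 1) ^ (e m - e j) : ℕ) : ℝ) /
      ((b : ℝ) + 1) ^ e m = ∑ j ∈ Finset.range (m + 1), (a j : ℝ) * (((b : ℝ) + 1) ^ e j)⁻¹ := by
    push_cast
    rw [Finset.sum_div]
    refine Finset.sum_congr rfl fun j hj => ?_
    have hjm : e j ≤ e m := he.monotone (by simp at hj; omega)
    rw [← Nat.sub_add_cancel hjm, pow_add, Nat.add_sub_cancel]
    field_simp
  rw [key, sparseSum_split he he1 a (m + 1)]
  constructor
  · linarith [sparseSum_nonneg (e := fun j => e (j + (m + 1))) (fun j => a (j + (m + 1)))]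
  · have h := sparseSum_le (p := e (m + 1) - 1) (e := fun j => e (j + (m + 1)))
      (fun j => by have := add_le_of_strictMono he (m + 1) j; have := he1 (m + 1); omega)
      (fun j => a (j + (m + 1)))
    have h2 : ((b : ℝ) + 1) / ((b : ℝ) + 1) ^ e (m + 1) = (((b : ℝ) + 1) ^ (e (m + 1) - 1))⁻¹ := by
      conv_lhs => rw [← Nat.sub_add_cancel (he1 (m + 1)), pow_succ]
      field_simp
    have h3 : ((b : ℝ) - 1) / b ≤ 1 := by rw [div_le_one hb]; linarith
    have h4 := mul_le_mul_of_nonneg_right h3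
      (show 0 ≤ (((b : ℝ) + 1) ^ (e (m + 1) - 1))⁻¹ by positivity)
    rw [h2]; linarith

/-- If `a` and `a'` first differ at `m`, the tails recover at most a proportion `(b - 1) / b` of the
gap created there. -/
lemma sparseSum_sub_ge (he : StrictMono e) (he1 : ∀ m, 1 ≤ e m) {a a' : ℕ → Fin b} {m : ℕ}
    (h : ∀ j < m, a j = a' j) (hm : a' m < a m) :
    (((b : ℝ) + 1) ^ (e m + 1))⁻¹ ≤ sparseSum e a - sparseSum e a' := by
  have hb : (0 : ℝ) < b := by exact_mod_cast (a 0).pos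
  rw [sparseSum_split he he1 a (m + 1), sparseSum_split he he1 a' (m + 1),
    Finset.sum_range_succ, Finset.sum_range_succ,
    Finset.sum_congr rfl fun j hj => by rw [h j (Finset.mem_range.1 hj)]]
  have h1 := sparseSum_nonneg (e := fun j => e (j + (m + 1))) (fun j => a (j + (m + 1)))
  have h2 := sparseSum_le (p := e m) (e := fun j => e (j + (m + 1)))
      (fun j => by
        have := add_le_of_strictMono he (m + 1) j; have := he (Nat.lt_succ_self m); 
        simp only [Nat.succ_eq_add_one] at *; omega)
      (fun j => a' (j + (m + 1)))
  have h3 : (a' m : ℝ) + 1 ≤ a m := by exact_mod_cast hm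
  set B := (((b : ℝ) + 1) ^ e m)⁻¹ with hB
  have hB0 : 0 < B := by positivity
  have h4 : (((b : ℝ) + 1) ^ (e m + 1))⁻¹ = B * ((b : ℝ) + 1)⁻¹ := by rw [pow_succ, mul_inv]
  have h5 : ((b : ℝ) + 1)⁻¹ ≤ (b : ℝ)⁻¹ := inv_anti₀ hb (by linarith)
  have h6 : ((b : ℝ) - 1) / b = 1 - (b : ℝ)⁻¹ := by field_simp
  rw [h4]; rw [h6] at h2
  nlinarith [mul_le_mul_of_nonneg_left h5 hB0.le, mul_le_mul_of_nonneg_right h3 hB0.le]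

lemma abs_sparseSum_sub_ge (he : StrictMono e) (he1 : ∀ m, 1 ≤ e m) {a a' : ℕ → Fin b} {m : ℕ}
    (h : ∀ j < m, a j = a' j) (hm : a m ≠ a' m) :
    (((b : ℝ) + 1) ^ (e m + 1))⁻¹ ≤ |sparseSum e a - sparseSum e a'| := by
  rcases lt_or_gt_of_ne hm with h1 | h1
  · rw [abs_sub_comm]
    exact (sparseSum_sub_ge he he1 (fun j hj => (h j hj).symm) h1).trans (le_abs_self _)
  · exact (sparseSum_sub_ge he he1 h h1).trans (le_abs_self _)

/-- The map `sparseSum e a ↦ Real.ofDigits a` is Hölder with exponent `r`: when `a` and `a'` first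
differ at `m`, the images are within `b ^ (-m)`, while the preimages are at least
`(b + 1) ^ (-(s * m + c + 1))` apart. -/
lemma holder_real (he : StrictMono e) (he1 : ∀ m, 1 ≤ e m) {s c r : ℝ} (hr : 0 ≤ r)
    (hes : ∀ m, (e m : ℝ) ≤ s * m + c) (hb : 2 ≤ b)
    (hrs : r * s * Real.log (b + 1) ≤ Real.log b) (a a' : ℕ → Fin b) :
    |Real.ofDigits a - Real.ofDigits a'| ≤
      ((b : ℝ) + 1) ^ ((c + 1) * r) * |sparseSum e a - sparseSum e a'| ^ r := by
  have hb0 : (0 : ℝ) < b := by exact_mod_cast (by omega : 0 < b)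
  by_cases hne : a = a'
  · subst hne; simp; positivity
  have hex : ∃ m, a m ≠ a' m := Function.ne_iff.1 hne
  classical
  obtain ⟨m, hm, hmin⟩ : ∃ m, a m ≠ a' m ∧ ∀ j < m, a j = a' j :=
    ⟨Nat.find hex, Nat.find_spec hex, fun j hj => not_not.1 (Nat.find_min hex hj)⟩
  have h1 := abs_sparseSum_sub_ge he he1 hmin hm
  refine (Real.abs_ofDigits_sub_ofDigits_le hmin).trans ?_
  refine le_trans ?_ (mul_le_mul_of_nonneg_left (Real.rpow_le_rpow (by positivity) h1 hr)
    (by positivity))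
  have hB : (0 : ℝ) < (b : ℝ) + 1 := by positivity
  have hL : 0 ≤ Real.log ((b : ℝ) + 1) := Real.log_nonneg (by linarith)
  rw [← Real.log_le_log_iff (by positivity) (by positivity), Real.log_mul (by positivity)
    (by positivity), Real.log_rpow hB, Real.log_rpow (by positivity), Real.log_inv, Real.log_inv,
    Real.log_pow, Real.log_pow]
  push_cast
  have h2 : r * Real.log ((b : ℝ) + 1) * e m ≤ r * Real.log ((b : ℝ) + 1) * (s * m + c) :=
    mul_le_mul_of_nonneg_left (hes m) (by positivity)
  have h3 := mul_le_mul_of_nonneg_left hrs (show (0 : ℝ) ≤ m by positivity)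
  nlinarith
end sparse

/-! ### Dot products close to a coarse grid -/

/-- If all coordinates of `x` and `y` are `δ`-close to `Q⁻¹ ℤ`, the dot product of their lifts to the
paraboloid is `O(δ)`-close to `Q⁻⁴ ℤ`. -/
lemma dot_approx {n : ℕ} {Q : ℕ} (hQ : 0 < Q) {δ : ℝ} (x y : Fin n → ℝ)
    (hx1 : ∀ i, x i ≤ 1) (hy1 : ∀ i, y i ≤ 1)
    (hx : ∀ i, ∃ z : ℕ, (z : ℝ) / Q ≤ x i ∧ x i ≤ z / Q + δ)
    (hy : ∀ i, ∃ z : ℕ, (z : ℝ) / Q ≤ y i ∧ y i ≤ z / Q + δ) :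
    ∃ p : ℕ, p ≤ (n + n ^ 2) * Q ^ 4 ∧
      ∑ i, x i * y i + (∑ i, x i ^ 2) * (∑ i, y i ^ 2) ∈
        Set.Icc ((p : ℝ) / Q ^ 4) (p / Q ^ 4 + (2 * n + 4 * n ^ 2) * δ) := by
  choose u hu hu' using hx
  choose v hv hv' using hy
  have hQ' : (0 : ℝ) < Q := by exact_mod_cast hQ
  -- products of `[0,1]`-valued approximations from below lose at most `2 * δ`
  have prod_bd : ∀ {s t s' t' : ℝ}, 0 ≤ s' → 0 ≤ t' → s' ≤ s → t' ≤ t → s ≤ 1 → t ≤ 1 →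
      s ≤ s' + δ → t ≤ t' + δ → s' * t' ≤ s * t ∧ s * t ≤ s' * t' + 2 * δ ∧ s * t ≤ 1 := by
    intro s t s' t' h1 h2 h3 h4 h5 h6 h7 h8
    have hδ : 0 ≤ δ := by linarith
    refine ⟨by nlinarith, by nlinarith, by nlinarith⟩
  have u0 : ∀ i, (0 : ℝ) ≤ u i / Q := fun i => by positivity
  have v0 : ∀ i, (0 : ℝ) ≤ v i / Q := fun i => by positivity
  have sum_bd : ∀ {f g : Fin n → ℝ}, (∀ i, g i ≤ f i ∧ f i ≤ g i + 2 * δ ∧ f i ≤ 1) →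
      ∑ i, g i ≤ ∑ i, f i ∧ ∑ i, f i ≤ ∑ i, g i + n * (2 * δ) ∧ ∑ i, f i ≤ n := by
    intro f g h
    refine ⟨Finset.sum_le_sum fun i _ => (h i).1, ?_, ?_⟩
    · calc ∑ i, f i ≤ ∑ i, (g i + 2 * δ) := Finset.sum_le_sum fun i _ => (h i).2.1
        _ = _ := by rw [Finset.sum_add_distrib]; simp
    · calc ∑ i, f i ≤ ∑ i : Fin n, (1 : ℝ) := Finset.sum_le_sum fun i _ => (h i).2.2
        _ = _ := by simp
  obtain ⟨a1, a2, a3⟩ := sum_bd fun i => prod_bd (u0 i) (v0 i) (hu i) (hv i) (hx1 i) (hy1 i)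
    (hu' i) (hv' i)
  obtain ⟨b1, b2, b3⟩ := sum_bd fun i => prod_bd (u0 i) (u0 i) (hu i) (hu i) (hx1 i) (hx1 i)
    (hu' i) (hu' i)
  obtain ⟨c1, c2, c3⟩ := sum_bd fun i => prod_bd (v0 i) (v0 i) (hv i) (hv i) (hy1 i) (hy1 i)
    (hv' i) (hv' i)
  simp only [← pow_two] at b1 b2 b3 c1 c2 c3
  have b0 : 0 ≤ ∑ i, ((u i : ℝ) / Q) ^ 2 := Finset.sum_nonneg fun i _ => by positivity
  have c0 : 0 ≤ ∑ i, ((v i : ℝ) / Q) ^ 2 := Finset.sum_nonneg fun i _ => by positivity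
  have hp : (((∑ i, u i * v i) * Q ^ 2 + (∑ i, u i ^ 2) * (∑ i, v i ^ 2) : ℕ) : ℝ) / Q ^ 4 =
      ∑ i, (u i : ℝ) / Q * (v i / Q) + (∑ i, ((u i : ℝ) / Q) ^ 2) * (∑ i, ((v i : ℝ) / Q) ^ 2) := by
    push_cast
    simp only [div_pow, div_mul_div_comm, ← Finset.sum_div]
    field_simp
  have hn : (0 : ℝ) ≤ n := by positivity
  -- a product of two sums in `[0, n]`, each with error `2 * n * δ`, has error `4 * n ^ 2 * δ`
  set X := ∑ i, x i ^ 2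
  set Y := ∑ i, y i ^ 2
  set X' := ∑ i, ((u i : ℝ) / Q) ^ 2
  set Y' := ∑ i, ((v i : ℝ) / Q) ^ 2
  have d1 : X' * Y' ≤ X * Y := mul_le_mul b1 c1 c0 (b0.trans b1)
  have d2 : X * Y ≤ n * n := mul_le_mul b3 c3 (c0.trans c1) hn
  have d3 : X * Y - X' * Y' ≤ n * (n * (2 * δ)) + n * (n * (2 * δ)) := by
    have h1 : X * (Y - Y') ≤ n * (n * (2 * δ)) :=
      mul_le_mul b3 (by linarith) (by linarith) hn
    have h2 : Y' * (X - X') ≤ n * (n * (2 * δ)) :=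
      mul_le_mul (by linarith) (by linarith) (by linarith) hn
    linarith
  refine ⟨(∑ i, u i * v i) * Q ^ 2 + (∑ i, u i ^ 2) * (∑ i, v i ^ 2), ?_, ?_, ?_⟩
  · have : (((∑ i, u i * v i) * Q ^ 2 + (∑ i, u i ^ 2) * (∑ i, v i ^ 2) : ℕ) : ℝ) ≤
        (n + n ^ 2) * Q ^ 4 := by
      rw [← div_le_iff₀ (by positivity), hp]; nlinarith
    exact_mod_cast this
  · rw [hp]; linarith
  · rw [hp]; linarith

lemma volume_le_of_grid {S : Set ℝ} {M Q : ℕ} {η : ℝ}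
    (h : ∀ t ∈ S, ∃ p : ℕ, p ≤ M * Q ^ 4 ∧ t ∈ Set.Icc ((p : ℝ) / Q ^ 4) (p / Q ^ 4 + η)) :
    volume S ≤ ENNReal.ofReal ((M * Q ^ 4 + 1) * η) := by
  have hsub : S ⊆ ⋃ p ∈ Finset.range (M * Q ^ 4 + 1),
      Set.Icc ((p : ℝ) / Q ^ 4) (p / Q ^ 4 + η) := by
    intro t ht
    obtain ⟨p, hp, hpt⟩ := h t ht
    simp only [Set.mem_iUnion]
    exact ⟨p, Finset.mem_range.2 (by omega), hpt⟩
  calc volume S ≤ _ := measure_mono hsub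
    _ ≤ ∑ p ∈ Finset.range (M * Q ^ 4 + 1), volume (Set.Icc ((p : ℝ) / Q ^ 4) (p / Q ^ 4 + η)) :=
      measure_biUnion_finset_le _ _
    _ = ENNReal.ofReal ((M * Q ^ 4 + 1) * η) := by
      rw [ENNReal.ofReal_mul (by positivity)]
      simp only [Real.volume_Icc, add_sub_cancel_left, Finset.sum_const, Finset.card_range,
        nsmul_eq_mul]
      congr 1
      rw [← ENNReal.ofReal_natCast]; push_cast; rfl

/-- A bounded set lying within `C * δ` of `Q⁻⁴ ℤ`, for a sequence of pairs `(Q, δ)` with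
`Q ^ 4 * δ → 0`, is Lebesgue null. -/
lemma null_of_grid {S : Set ℝ} {M B : ℕ} {C : ℝ} (hB : 1 < B) (hC : 0 ≤ C)
    (h : ∀ k : ℕ, ∃ Q : ℕ, 0 < Q ∧ ∃ δ : ℝ, 0 ≤ δ ∧ Q ^ 4 * δ ≤ B / (B : ℝ) ^ k ∧ ∀ t ∈ S,
      ∃ p : ℕ, p ≤ M * Q ^ 4 ∧ t ∈ Set.Icc ((p : ℝ) / Q ^ 4) (p / Q ^ 4 + C * δ)) :
    volume S = 0 := by
  have hB' : (1 : ℝ) < B := by exact_mod_cast hB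
  have hk : ∀ k : ℕ, volume S ≤ ENNReal.ofReal (((M + 1) * C * B) * ((B : ℝ)⁻¹) ^ k) := by
    intro k
    obtain ⟨Q, hQ, δ, hδ, hQδ, hS⟩ := h k
    refine (volume_le_of_grid hS).trans (ENNReal.ofReal_le_ofReal ?_)
    have hQ4 : (1 : ℝ) ≤ Q ^ 4 := by exact_mod_cast Nat.one_le_pow _ _ hQ
    have h1 : (M * (Q : ℝ) ^ 4 + 1) ≤ (M + 1) * Q ^ 4 := by linarith
    calc (M * (Q : ℝ) ^ 4 + 1) * (C * δ) ≤ ((M + 1) * Q ^ 4) * (C * δ) := by gcongr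
      _ = (M + 1) * C * (Q ^ 4 * δ) := by ring
      _ ≤ (M + 1) * C * (B / (B : ℝ) ^ k) := by gcongr
      _ = _ := by rw [inv_pow]; ring
  have hlim : Tendsto (fun k : ℕ => ENNReal.ofReal (((M + 1) * C * B) * ((B : ℝ)⁻¹) ^ k)) atTop
      (𝓝 0) := by
    have := (tendsto_pow_atTop_nhds_zero_of_lt_one (r := (B : ℝ)⁻¹) (by positivity)
      (inv_lt_one_of_one_lt₀ hB')).const_mul ((M + 1) * C * B)
    rw [mul_zero] at this
    simpa using ENNReal.tendsto_ofReal this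
  exact le_antisymm (ge_of_tendsto' hlim hk) zero_le

/-! ### Dimension bound through a Hölder parametrization -/

/-- The hypothesis says that `F` factors through `G` by an `r`-Hölder map on the range of `G`. -/
lemma dimH_range_le_of_holder {X Y Z : Type*} [EMetricSpace Y] [EMetricSpace Z]
    (G : X → Y) (F : X → Z) {C r : NNReal} (hr : 0 < r)
    (h : ∀ x x', edist (F x) (F x') ≤ C * edist (G x) (G x') ^ (r : ℝ)) :
    dimH (Set.range F) * r ≤ dimH (Set.range G) := by
  rcases isEmpty_or_nonempty X with hX | hX
  · simp [Set.range_eq_empty]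
  have hG : ∀ x, G (Function.invFun G (G x)) = G x := fun x => Function.invFun_eq ⟨x, rfl⟩
  have hFG : ∀ x, F (Function.invFun G (G x)) = F x := fun x => by
    have := h (Function.invFun G (G x)) x
    rw [hG, edist_self, ENNReal.zero_rpow_of_pos (by exact_mod_cast hr), mul_zero] at this
    exact edist_le_zero.1 this
  have hH : HolderOnWith C r (F ∘ Function.invFun G) (Set.range G) := by
    rintro _ ⟨x, rfl⟩ _ ⟨x', rfl⟩
    simpa [hFG] using h x x'
  have := hH.dimH_image_le hr
  rw [← Set.range_comp] at this
  have hc : (F ∘ Function.invFun G) ∘ G = F := funext hFG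
  rw [hc] at this
  exact ENNReal.mul_le_of_le_div this

/-! ### The lift to the paraboloid -/

/-- The point `(x, |x|²)` of the standard paraboloid in `ℝ ^ (n + 1)`. -/
noncomputable def paraboloidLift {n : ℕ} (x : EuclideanSpace ℝ (Fin n)) :
    EuclideanSpace ℝ (Fin (n + 1)) :=
  WithLp.toLp 2 fun i => if h : (i : ℕ) < n then x ⟨i, h⟩ else ‖x‖ ^ 2

lemma paraboloidLift_castSucc {n : ℕ} (x : EuclideanSpace ℝ (Fin n)) (i : Fin n) :
    paraboloidLift x i.castSucc = x i := by
  simp [paraboloidLift]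

lemma paraboloidLift_last {n : ℕ} (x : EuclideanSpace ℝ (Fin n)) :
    paraboloidLift x (Fin.last n) = ‖x‖ ^ 2 := by
  simp [paraboloidLift]

lemma continuous_paraboloidLift {n : ℕ} : Continuous (paraboloidLift (n := n)) := by
  refine (PiLp.continuous_toLp 2 _).comp (continuous_pi fun i => ?_)
  split_ifs <;> fun_prop

lemma paraboloidLift_mem {n : ℕ} (x : EuclideanSpace ℝ (Fin n)) :
    paraboloidLift x ∈ stdParaboloid (n + 1) := ⟨x, rfl⟩

lemma inner_paraboloidLift {n : ℕ} (x y : EuclideanSpace ℝ (Fin n)) :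
    ⟪paraboloidLift x, paraboloidLift y⟫ =
      ∑ i, x i * y i + (∑ i, x i ^ 2) * (∑ i, y i ^ 2) := by
  rw [PiLp.inner_apply, Fin.sum_univ_castSucc]
  simp only [paraboloidLift_castSucc, paraboloidLift_last, EuclideanSpace.real_norm_sq_eq]
  simp [mul_comm]

/-! ### Conclusion -/

/-- The range contains the open unit cube, the sup-norm ball of radius `1 / 2` about its centre. -/
lemma ofDigits_range_dim {n b : ℕ} (hb : 2 ≤ b) :
    dimH (Set.range fun (a : Fin n → ℕ → Fin b) (i : Fin n) => Real.ofDigits (a i)) = n := by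
  have hsub : Metric.ball (fun _ : Fin n => (1 / 2 : ℝ)) (1 / 2) ⊆
      Set.range fun (a : Fin n → ℕ → Fin b) (i : Fin n) => Real.ofDigits (a i) := by
    intro x hx
    have : ∀ i, ∃ a : ℕ → Fin b, Real.ofDigits a = x i := by
      intro i
      have h1 : dist (x i) (1 / 2) < 1 / 2 := (dist_le_pi_dist x _ i).trans_lt hx
      rw [Real.dist_eq, abs_lt] at h1
      have : NeZero b := ⟨by omega⟩
      exact ⟨_, Real.ofDigits_digits (by omega) ⟨by linarith, by linarith⟩⟩
    choose a ha using this
    exact ⟨a, funext ha⟩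
  refine le_antisymm ?_ ?_
  · exact (dimH_mono (Set.subset_univ _)).trans_eq (Real.dimH_univ_pi_fin n)
  · exact (Real.dimH_ball_pi_fin _ (by norm_num)).symm.le.trans (dimH_mono hsub)

/-- Choice of the base and of the Hölder exponent. With `r = (N - 1) / (4 * N + 20)`, which tends to
`1 / 4`, the last inequality becomes `(1 - 1 / N) * log (N + 1) ≤ log N`. -/
lemma exists_param {n : ℕ} (hn : 1 ≤ n) {ε : ℝ} (hε : 0 < ε) :
    ∃ N : ℕ, 20 ≤ N ∧ ∃ r : ℝ, 0 < r ∧ (n : ℝ) / 4 - ε < n * r ∧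
      r * (4 + 20 / N) * Real.log (N + 1) ≤ Real.log N := by
  have hn' : (0 : ℝ) < n := by exact_mod_cast hn
  obtain ⟨N, hN⟩ := exists_nat_gt (6 * n / ε)
  refine ⟨N + 20, by omega, ?_⟩
  have hM : (20 : ℝ) ≤ ((N + 20 : ℕ) : ℝ) := by exact_mod_cast (by omega : 20 ≤ N + 20)
  have hM' : 6 * n / ε < ((N + 20 : ℕ) : ℝ) := hN.trans_le (by push_cast; linarith)
  generalize ((N + 20 : ℕ) : ℝ) = M at *
  have hM0 : 0 < M := by linarith
  refine ⟨(M - 1) / (4 * M + 20), by apply div_pos <;> linarith, ?_, ?_⟩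
  · rw [div_lt_iff₀ hε] at hM'
    have : (M - 1) / (4 * M + 20) = 1 / 4 - 6 / (4 * M + 20) := by field_simp; ring
    rw [this]
    have : n * (6 / (4 * M + 20)) < ε := by
      rw [mul_div_assoc', div_lt_iff₀ (by positivity)]; nlinarith
    linarith
  · have h1 : (M - 1) / (4 * M + 20) * (4 + 20 / M) = 1 - 1 / M := by field_simp
    rw [h1]
    have hL : 1 ≤ Real.log (M + 1) := by
      rw [Real.le_log_iff_exp_le (by linarith)]
      linarith [Real.exp_one_lt_d9]
    have h2 : Real.log (M + 1) - Real.log M ≤ 1 / M := by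
      rw [← Real.log_div (by positivity) (by positivity)]
      refine (Real.log_le_sub_one_of_pos (by positivity)).trans_eq ?_
      field_simp; ring
    have h3 : 0 < 1 / M := by positivity
    nlinarith

/-- For `d ≥ 2` and every `ε > 0` there is a compact subset `F` of the standard
paraboloid `P_d` with Hausdorff dimension greater than `(d-1)/4 - ε` whose dot product
set has Lebesgue measure zero. -/
theorem paraboloid_counterexample_quarter
    (d : ℕ) (hd : 2 ≤ d) (ε : ℝ) (hε : 0 < ε) :
    ∃ F : Set (EuclideanSpace ℝ (Fin d)), F ⊆ stdParaboloid d ∧ IsCompact F ∧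
      ENNReal.ofReal (((d : ℝ) - 1) / 4 - ε) < dimH F ∧ volume (dotSet F) = 0 := by
  obtain ⟨n, rfl⟩ : ∃ n, d = n + 1 := ⟨d - 1, by omega⟩
  have hn : 1 ≤ n := by omega
  obtain ⟨b, hb, r, hr, hnr, hrs⟩ := exists_param hn hε
  obtain ⟨e, he, he1, hes, hgap⟩ := exists_positions b hb
  have hb0 : (0 : ℝ) < b := by exact_mod_cast (by omega : 0 < b)
  let g : (Fin n → ℕ → Fin b) → EuclideanSpace ℝ (Fin n) :=
    fun a => WithLp.toLp 2 fun i => sparseSum e (a i)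
  have hg : Continuous g := (PiLp.continuous_toLp 2 _).comp
    (continuous_pi fun i => (continuous_sparseSum he he1).comp (continuous_apply i))
  refine ⟨Set.range fun a => paraboloidLift (g a), ?_, ?_, ?_, ?_⟩
  · rintro _ ⟨a, rfl⟩
    exact paraboloidLift_mem _
  · exact isCompact_range (continuous_paraboloidLift.comp hg)
  · have key := dimH_range_le_of_holder (fun a => paraboloidLift (g a))
      (fun (a : Fin n → ℕ → Fin b) (i : Fin n) => Real.ofDigits (a i))
      (C := Real.toNNReal (((b : ℝ) + 1) ^ ((24 + 1) * r))) (r := Real.toNNReal r)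
      (Real.toNNReal_pos.2 hr) (by
        intro a a'
        rw [edist_pi_le_iff]
        intro i
        have h1 := holder_real he he1 hr.le hes (by omega) hrs (a i) (a' i)
        have h2 : |sparseSum e (a i) - sparseSum e (a' i)| ≤
            dist (paraboloidLift (g a)) (paraboloidLift (g a')) := by
          have h3 := PiLp.norm_apply_le (paraboloidLift (g a) - paraboloidLift (g a')) i.castSucc
          rw [PiLp.sub_apply, paraboloidLift_castSucc, paraboloidLift_castSucc, ← dist_eq_norm,
            ← dist_eq_norm] at h3
          exact h3
        rw [edist_dist, edist_dist, Real.coe_toNNReal r hr.le, ENNReal.ofReal_rpow_of_nonneg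
          dist_nonneg hr.le, ← ENNReal.ofReal, ← ENNReal.ofReal_mul (by positivity)]
        refine ENNReal.ofReal_le_ofReal (h1.trans ?_)
        gcongr)
    rw [ofDigits_range_dim (by omega)] at key
    refine lt_of_lt_of_le ?_ key
    rw [← ENNReal.ofReal_natCast, ← ENNReal.ofReal, ← ENNReal.ofReal_mul (by positivity)]
    refine (ENNReal.ofReal_lt_ofReal_iff (by positivity)).2 ?_
    push_cast
    simpa using hnr
  · refine null_of_grid (M := n + n ^ 2) (B := b + 1) (C := 2 * n + 4 * n ^ 2) (by omega)
      (by positivity) fun k => ?_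
    obtain ⟨m, hm⟩ := hgap k
    refine ⟨(b + 1) ^ e m, by positivity, ((b : ℝ) + 1) / ((b : ℝ) + 1) ^ e (m + 1),
      by positivity, ?_, ?_⟩
    · push_cast
      have h1 : ((b : ℝ) + 1) ^ (4 * e m + k) ≤ ((b : ℝ) + 1) ^ e (m + 1) :=
        pow_le_pow_right₀ (by linarith) hm
      rw [mul_div_assoc', div_le_div_iff₀ (by positivity) (by positivity), ← pow_mul,
        mul_comm (e m) 4]
      calc ((b : ℝ) + 1) ^ (4 * e m) * (b + 1) * (b + 1) ^ k
          = (b + 1) * ((b : ℝ) + 1) ^ (4 * e m + k) := by rw [pow_add]; ring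
        _ ≤ _ := by gcongr
    · rintro _ ⟨_, ⟨a, rfl⟩, _, ⟨a', rfl⟩, rfl⟩
      simp only [inner_paraboloidLift]
      refine dot_approx (by positivity) (g a).ofLp (g a').ofLp
        (fun i => sparseSum_le_one he he1 _) (fun i => sparseSum_le_one he he1 _)
        (fun i => ?_) (fun i => ?_)
      · simpa using sparseSum_approx he he1 (a i) m
      · simpa using sparseSum_approx he he1 (a' i) m
end
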